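/- arXiv:1906.03429 — 15 statements merged into one kernel-verified Lean document; each statement's English description precedes it below -/
import Mathlib

section
/- Let n ≥ 1, let θ, τ be permutations of {1,…,n}, and suppose θ⁻¹τ = C₁C₂⋯C_r is the disjoint cycle expression of θ⁻¹τ (i.e., C₁,…,C_r are pairwise disjoint cycles, each of length at least 2, whose product is θ⁻¹τ). Then X(θ,τ) = { θ·∏_{i∈I} C_i : I ⊆ {1,…,r} }. -/
open Equiv Finset

theorem aux_prod {n r : ℕ} (C : Fin r → Equiv.Perm (Fin n))
    (hdisj : ∀ i j, i ≠ j → (C i).Disjoint (C j)) (I : Finset (Fin r)) (x : Fin n)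
    (hc : (I : Set (Fin r)).Pairwise (Function.onFun Commute C)) :
    (∀ j ∈ I, C j x ≠ x →
      I.noncommProd C hc x = C j x) ∧
    ((∀ j ∈ I, C j x = x) →
      I.noncommProd C hc x = x) := by
  induction I using Finset.induction_on with
  | empty => simp
  | insert a s ha ih =>
    obtain ⟨ih1, ih2⟩ := ih (fun i _ j _ hij => (hdisj i j hij).commute)
    rw [Finset.noncommProd_insert_of_notMem _ _ _ _ ha, Equiv.Perm.mul_apply]
    refine ⟨fun j hj hx => ?_, fun h => ?_⟩
    · rcases Finset.mem_insert.1 hj with rfl | hj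
      · rw [ih2]
        intro i hi
        have hne : j ≠ i := fun h => ha (h ▸ hi)
        exact (hdisj j i hne x).resolve_left hx
      · rw [ih1 j hj hx]
        have hne : a ≠ j := fun h => ha (h ▸ hj)
        exact (hdisj a j hne (C j x)).resolve_right (fun h => hx ((C j).injective h))
    · rw [ih2 (fun j hj => h j (Finset.mem_insert_of_mem hj))]
      exact h a (Finset.mem_insert_self a s)

/-- If `θ⁻¹τ = C₁⋯C_r` is the disjoint cycle expression of `θ⁻¹τ`
(pairwise disjoint cycles, each of length at least 2, whose product is `θ⁻¹τ`), then
`X(θ,τ) = { θ·∏_{i∈I} C_i : I ⊆ [r] }`, where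
`X(θ,τ) = { σ ∈ S_n : ∀ i, σ(i) = θ(i) or σ(i) = τ(i) }`. -/
theorem genMatrixFn_stmt0 (n r : ℕ) (hn : 1 ≤ n) (θ τ : Equiv.Perm (Fin n))
    (C : Fin r → Equiv.Perm (Fin n))
    (hcyc : ∀ i, (C i).IsCycle)
    (hlen : ∀ i, 2 ≤ (C i).support.card)
    (hdisj : ∀ i j, i ≠ j → (C i).Disjoint (C j))
    (hprod : (Finset.univ.noncommProd C
      (fun i _ j _ hij => (hdisj i j hij).commute)) = θ⁻¹ * τ) :
    {σ : Equiv.Perm (Fin n) | ∀ i, σ i = θ i ∨ σ i = τ i} =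
      {σ : Equiv.Perm (Fin n) | ∃ I : Finset (Fin r),
        σ = θ * I.noncommProd C (fun i _ j _ hij => (hdisj i j hij).commute)} := by
  classical
  have hpi : ∀ j x, C j x ≠ x → θ (C j x) = τ x := by
    intro j x hx
    have h := (aux_prod C hdisj Finset.univ x
      (fun i _ j _ hij => (hdisj i j hij).commute)).1 j (Finset.mem_univ j) hx
    rw [hprod] at h
    rw [← h]
    simp
  have hfix : ∀ x, (∀ j, C j x = x) → θ x = τ x := by
    intro x hx
    have h := (aux_prod C hdisj Finset.univ x
      (fun i _ j _ hij => (hdisj i j hij).commute)).2 (fun j _ => hx j)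
    rw [hprod] at h
    nth_rw 1 [← h]
    simp
  ext σ
  simp only [Set.mem_ofPred_eq]
  constructor
  · intro hσ
    have hstep : ∀ j x, C j x ≠ x → σ x ≠ θ x → σ (C j x) ≠ θ (C j x) := by
      intro j x hx hs h
      rw [hpi j x hx, ← (hσ x).resolve_left hs] at h
      exact hx (σ.injective h)
    have hpow : ∀ j x, C j x ≠ x → σ x ≠ θ x → ∀ k : ℕ,
        C j ((C j ^ k) x) ≠ (C j ^ k) x ∧ σ ((C j ^ k) x) ≠ θ ((C j ^ k) x) := by
      intro j x hx hs k
      induction k with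
      | zero => exact ⟨hx, hs⟩
      | succ k ih =>
        rw [pow_succ', Equiv.Perm.mul_apply]
        exact ⟨fun h => ih.1 ((C j).injective h), hstep j _ ih.1 ih.2⟩
    refine ⟨Finset.univ.filter (fun j => ∃ x, C j x ≠ x ∧ σ x ≠ θ x), ?_⟩
    ext1 x
    rw [Equiv.Perm.mul_apply]
    set I := Finset.univ.filter (fun j => ∃ x, C j x ≠ x ∧ σ x ≠ θ x) with hI
    by_cases h : ∃ j ∈ I, C j x ≠ x
    · obtain ⟨j, hj, hx⟩ := h
      rw [(aux_prod C hdisj I x (fun i _ j _ hij => (hdisj i j hij).commute)).1 j hj hx, hpi j x hx]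
      obtain ⟨y, hy, hsy⟩ := (Finset.mem_filter.1 hj).2
      obtain ⟨k, hk⟩ := (hcyc j).exists_pow_eq hy hx
      have := (hpow j y hy hsy k).2
      rw [hk] at this
      exact (hσ x).resolve_left this
    · push Not at h
      rw [(aux_prod C hdisj I x (fun i _ j _ hij => (hdisj i j hij).commute)).2 h]
      by_contra hs
      have h2 : ∀ j, C j x = x := by
        intro j
        by_contra hx
        exact hx (h j (Finset.mem_filter.2 ⟨Finset.mem_univ j, x, hx, hs⟩))
      have h3 := hfix x h2
      rcases hσ x with h4 | h4
      · exact hs h4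
      · exact hs (h4.trans h3.symm)
  · rintro ⟨I, rfl⟩ x
    rw [Equiv.Perm.mul_apply]
    by_cases h : ∃ j ∈ I, C j x ≠ x
    · obtain ⟨j, hj, hx⟩ := h
      right
      rw [(aux_prod C hdisj I x (fun i _ j _ hij => (hdisj i j hij).commute)).1 j hj hx, hpi j x hx]
    · push Not at h
      left
      rw [(aux_prod C hdisj I x (fun i _ j _ hij => (hdisj i j hij).commute)).2 h]
end

section
/- Let n ≥ 1, let θ, τ be permutations of {1,…,n}, let a, b ∈ ℂ, and let σ ∈ X(θ,τ). Then ∏_{i=1}^n (aP_θ + bP_τ)_{σ(i), i} = a^{n − t_σ − F} · b^{t_σ} · (a+b)^F, where t_σ = n − |Fix(θ⁻¹σ)| and F = |Fix(θ⁻¹τ)|. -/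
open Finset

/-- The permutation matrix of `θ`: `(P_θ)_{i,j} = 1` if `i = θ(j)`, else `0`. -/
noncomputable def permMat {n : ℕ} (θ : Equiv.Perm (Fin n)) : Matrix (Fin n) (Fin n) ℂ :=
  Matrix.of fun i j => if i = θ j then 1 else 0

/-- For `σ ∈ X(θ,τ)`,
`∏_{i=1}^n (aP_θ + bP_τ)_{σ(i), i} = a^{n − t_σ − F} · b^{t_σ} · (a+b)^F`,
where `t_σ = n − |Fix(θ⁻¹σ)|` and `F = |Fix(θ⁻¹τ)|`. -/
theorem genMatrixFn_stmt2 (n : ℕ) (hn : 1 ≤ n) (θ τ σ : Equiv.Perm (Fin n)) (a b : ℂ)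
    (hσ : ∀ i, σ i = θ i ∨ σ i = τ i)
    (tσ F : ℕ)
    (htσ : tσ = n - (Finset.univ.filter fun i => (θ⁻¹ * σ) i = i).card)
    (hF : F = (Finset.univ.filter fun i => (θ⁻¹ * τ) i = i).card) :
    ∏ i, (a • permMat θ + b • permMat τ) (σ i) i =
      a ^ (n - tσ - F) * b ^ tσ * (a + b) ^ F := by
  have e1 : (Finset.univ.filter fun i => (θ⁻¹ * σ) i = i) =
      Finset.univ.filter fun i => σ i = θ i := by
    ext i
    simp only [Equiv.Perm.mul_apply, Equiv.Perm.inv_eq_iff_eq, Finset.mem_filter,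
      Finset.mem_univ, true_and]
  have e2 : (Finset.univ.filter fun i => (θ⁻¹ * τ) i = i) =
      (Finset.univ.filter fun i => σ i = θ i).filter fun i => τ i = θ i := by
    ext i
    have := hσ i
    simp only [Equiv.Perm.mul_apply, Equiv.Perm.inv_eq_iff_eq, Finset.mem_filter,
      Finset.mem_univ, true_and]
    grind
  rw [e1] at htσ
  rw [e2] at hF
  have c1 := Finset.card_filter_add_card_filter_not (s := (Finset.univ : Finset (Fin n)))
    (fun i => σ i = θ i)
  have c2 := Finset.card_filter_add_card_filter_not (s := Finset.univ.filter fun i => σ i = θ i)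
    (fun i => τ i = θ i)
  rw [Finset.card_univ, Fintype.card_fin] at c1
  have h1 : n - tσ - F = (((Finset.univ.filter fun i => σ i = θ i)).filter
    fun i => ¬ τ i = θ i).card := by omega
  have h2 : tσ = (Finset.univ.filter fun i => ¬ σ i = θ i).card := by omega
  rw [← Finset.prod_filter_mul_prod_filter_not Finset.univ (fun i => σ i = θ i),
    ← Finset.prod_filter_mul_prod_filter_not (Finset.univ.filter fun i => σ i = θ i)
      (fun i => τ i = θ i)]
  rw [Finset.prod_eq_pow_card (b := a + b), Finset.prod_eq_pow_card (b := a),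
    Finset.prod_eq_pow_card (b := b), h1, ← hF, ← h2]
  · ring
  · intro i hi
    have := hσ i
    simp only [Finset.mem_filter, Finset.mem_univ, true_and] at hi
    have h3 : σ i = τ i := by tauto
    have h4 : ¬ τ i = θ i := h3 ▸ hi
    simp [permMat, h3, h4]
  · intro i hi
    simp only [Finset.mem_filter, Finset.mem_univ, true_and] at hi
    have h4 : ¬ θ i = τ i := fun h => hi.2 h.symm
    simp [permMat, hi.1, h4]
  · intro i hi
    simp only [Finset.mem_filter, Finset.mem_univ, true_and] at hi
    simp [permMat, hi.1, hi.2]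
end

section
/- Let n ≥ 1, let θ, τ be permutations of {1,…,n}, let a, b ∈ ℂ, let G be a subgroup of S_n, and let χ : G → ℂ be any function (in particular, any character of G). Then d_χ^G(aP_θ + bP_τ) = (a+b)^F · Σ_{σ ∈ X(θ,τ) ∩ G} χ(σ⁻¹) · a^{n − t_σ − F} · b^{t_σ}, where t_σ = n − |Fix(θ⁻¹σ)| and F = |Fix(θ⁻¹τ)|. -/
open Finset

/-- For any subgroup `G` of `S_n` and any function `χ : G → ℂ`,
`d_χ^G(aP_θ + bP_τ) = (a+b)^F · Σ_{σ ∈ X(θ,τ) ∩ G} χ(σ⁻¹) a^{n − t_σ − F} b^{t_σ}`,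
where `t_σ = n − |Fix(θ⁻¹σ)|` and `F = |Fix(θ⁻¹τ)|`. -/
theorem genMatrixFn_stmt4 (n : ℕ) (hn : 1 ≤ n) (θ τ : Equiv.Perm (Fin n)) (a b : ℂ)
    (G : Subgroup (Equiv.Perm (Fin n))) [Fintype G] (χ : G → ℂ) (F : ℕ)
    (hF : F = (Finset.univ.filter fun i => (θ⁻¹ * τ) i = i).card) :
    ∑ σ : G, χ σ * ∏ i, (a • permMat θ + b • permMat τ) i ((σ : Equiv.Perm (Fin n)) i) =
      (a + b) ^ F *
        ∑ σ ∈ Finset.univ.filter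
            (fun σ : G => ∀ i, (σ : Equiv.Perm (Fin n)) i = θ i ∨
              (σ : Equiv.Perm (Fin n)) i = τ i),
          χ σ⁻¹ *
            a ^ (n - (n - (Finset.univ.filter fun i =>
                  (θ⁻¹ * (σ : Equiv.Perm (Fin n))) i = i).card) - F) *
            b ^ (n - (Finset.univ.filter fun i =>
                  (θ⁻¹ * (σ : Equiv.Perm (Fin n))) i = i).card) := by
  classical
  rw [← Equiv.sum_comp (Equiv.inv G), Finset.mul_sum, Finset.sum_filter]
  refine Finset.sum_congr rfl fun σ _ => ?_
  obtain ⟨ρ, hρ⟩ := σ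
  simp only [Equiv.inv_apply, InvMemClass.coe_inv]
  have hprod : ∏ i, (a • permMat θ + b • permMat τ) i (ρ⁻¹ i)
      = ∏ j, ((if ρ j = θ j then a else 0) + (if ρ j = τ j then b else 0)) := by
    rw [← Equiv.prod_comp ρ]
    refine Finset.prod_congr rfl fun j _ => ?_
    simp [permMat]
  rw [hprod]
  split_ifs with h
  · have e1 : ∀ π : Equiv.Perm (Fin n), ∀ i, (θ⁻¹ * π) i = i ↔ π i = θ i := by
      intro π i
      rw [Equiv.Perm.mul_apply, Equiv.Perm.inv_eq_iff_eq]
    simp only [e1] at hF ⊢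
    have hp : ∏ j, ((if ρ j = θ j then a else 0) + (if ρ j = τ j then b else 0))
        = ∏ j, ((if τ j = θ j then a + b else 1) *
            ((if ρ j = θ j ∧ ¬ τ j = θ j then a else 1) * (if ¬ ρ j = θ j then b else 1))) := by
      refine Finset.prod_congr rfl fun j _ => ?_
      have := h j
      by_cases h1 : τ j = θ j
      · have h2 : ρ j = θ j := by rcases this with h | h <;> simp [h, h1]
        simp [h1, h2]
      · by_cases h2 : ρ j = θ j
        · have h3 : ¬ θ j = τ j := fun h => h1 h.symm
          simp [h1, h2, h3]
        · have h3 : ρ j = τ j := this.resolve_left h2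
          simp [h1, h3]
    rw [hp, Finset.prod_mul_distrib, Finset.prod_mul_distrib]
    simp only [Finset.prod_ite, Finset.prod_const, Finset.prod_const_one, mul_one]
    have hc := Finset.card_filter_add_card_filter_not (s := (Finset.univ : Finset (Fin n)))
      (fun i => ρ i = θ i)
    rw [Finset.card_univ, Fintype.card_fin] at hc
    have hd := Finset.card_filter_add_card_filter_not
      (s := (Finset.univ : Finset (Fin n)).filter (fun i => ρ i = θ i)) (fun i => τ i = θ i)
    rw [Finset.filter_filter, Finset.filter_filter] at hd
    have hs : (Finset.univ.filter fun i => ρ i = θ i ∧ τ i = θ i)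
        = Finset.univ.filter fun i => τ i = θ i := by
      ext i
      simp only [Finset.mem_filter, Finset.mem_univ, true_and]
      refine ⟨fun h => h.2, fun h1 => ⟨?_, h1⟩⟩
      rcases h i with h2 | h2
      · exact h2
      · exact h2.trans h1
    rw [hs, ← hF] at hd
    rw [← hF]
    have k1 : n - (n - (Finset.univ.filter fun i => ρ i = θ i).card) - F
        = (Finset.univ.filter fun i => ρ i = θ i ∧ ¬ τ i = θ i).card := by omega
    have k2 : n - (Finset.univ.filter fun i => ρ i = θ i).card
        = (Finset.univ.filter fun i => ¬ ρ i = θ i).card := by omega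
    rw [k1, k2]
    ring
  · push Not at h
    obtain ⟨i, h1, h2⟩ := h
    rw [Finset.prod_eq_zero (Finset.mem_univ i), mul_zero]
    simp [h1, h2]
end

section
/- Let n ≥ 1, let θ, τ be permutations of {1,…,n}, and let a, b ∈ ℂ. Suppose θ⁻¹τ = C₁⋯C_r is the disjoint cycle expression of θ⁻¹τ, where C_i is a cycle of length l_i ≥ 2, and let F = |Fix(θ⁻¹τ)|. Then det(aP_θ + bP_τ) = sgn(θ) · (a+b)^F · Σ_{I ⊆ {1,…,r}} (−1)^{|I| + Σ_{i∈I} l_i} · a^{n − Σ_{i∈I} l_i − F} · b^{Σ_{i∈I} l_i}. -/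
open Finset

noncomputable def cycMat {n : ℕ} (a b : ℂ) (σ : Equiv.Perm (Fin n)) : Matrix (Fin n) (Fin n) ℂ :=
  Matrix.of fun i j => if σ j = j then (if i = j then 1 else 0)
    else a * (if i = j then 1 else 0) + b * (if i = σ j then 1 else 0)

lemma col_sum {n : ℕ} (a b : ℂ) (f : Fin n → ℂ) (j k : Fin n) :
    ∑ x, f x * (a * (if x = j then 1 else 0) + b * (if x = k then 1 else 0))
      = a * f j + b * f k := by
  simp only [mul_add, Finset.sum_add_distrib, mul_ite, mul_one, mul_zero,
    Finset.sum_ite_eq', Finset.sum_ite_eq, Finset.mem_univ, if_true]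
  ring

lemma cycMat_mul {n : ℕ} (a b : ℂ) (σ ρ : Equiv.Perm (Fin n)) (h : σ.Disjoint ρ) :
    cycMat a b (σ * ρ) = cycMat a b σ * cycMat a b ρ := by
  ext i j
  rw [Matrix.mul_apply]
  by_cases hρ : ρ j = j
  · simp [cycMat, hρ]
  · have hσ : σ j = j := (h j).resolve_right hρ
    have hσ' : σ (ρ j) = ρ j := (h (ρ j)).resolve_right (fun h' => hρ (ρ.injective h'))
    have e : ∀ x, cycMat a b ρ x j
        = a * (if x = j then 1 else 0) + b * (if x = ρ j then 1 else 0) := by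
      intro x; simp [cycMat, hρ]
    simp only [e]
    rw [col_sum]
    simp [cycMat, hρ, hσ', hσ]

lemma cycMat_one {n : ℕ} (a b : ℂ) : cycMat a b (1 : Equiv.Perm (Fin n)) = 1 := by
  ext i j
  simp [cycMat, Matrix.one_apply]

lemma perm_eq_of_cycle {n : ℕ} (σ π : Equiv.Perm (Fin n)) (hσ : σ.IsCycle)
    (h : ∀ j, π j = j ∨ π j = σ j) : π = 1 ∨ π = σ := by
  by_cases h1 : ∀ j, π j = j
  · left; ext j; simp [h1 j]
  · right
    push Not at h1
    obtain ⟨x, hx⟩ := h1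
    have hxs : π x = σ x := (h x).resolve_left hx
    have key : ∀ k : ℕ, π ((σ ^ k) x) ≠ (σ ^ k) x := by
      intro k
      induction k with
      | zero => simpa using hx
      | succ k ih =>
        rw [pow_succ', Equiv.Perm.mul_apply]
        have e := (h ((σ ^ k) x)).resolve_left ih
        intro e2
        rw [← e] at e2
        exact ih (π.injective e2)
    ext j
    by_cases hj : σ j = j
    · rcases h j with e | e <;> simp [e, hj]
    · obtain ⟨k, hk⟩ := hσ.exists_pow_eq (hxs ▸ hx) hj
      have := (h j).resolve_left (hk ▸ key k)
      rw [this]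

lemma det_cycMat_cycle {n : ℕ} (a b : ℂ) (σ : Equiv.Perm (Fin n)) (hσ : σ.IsCycle) :
    (cycMat a b σ).det = -(-b) ^ σ.support.card + a ^ σ.support.card := by
  rw [Matrix.det_apply']
  have hne : σ ≠ 1 := hσ.ne_one
  have hp : ∀ c : ℂ, ∏ j, (if σ j = j then 1 else c) = c ^ σ.support.card := by
    intro c
    rw [Finset.prod_ite]
    simp [Equiv.Perm.support]
  rw [← Finset.sum_subset (Finset.subset_univ ({σ, 1} : Finset (Equiv.Perm (Fin n)))),
    Finset.sum_pair hne]
  · have e1 : ∀ j, cycMat a b σ (σ j) j = if σ j = j then 1 else b := by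
      intro j
      by_cases hj : σ j = j <;> simp [cycMat, hj]
    have e2 : ∀ j, cycMat a b σ j j = if σ j = j then 1 else a := by
      intro j
      by_cases hj : σ j = j
      · simp [cycMat, hj]
      · simp [cycMat, hj, Ne.symm hj]
    simp only [Equiv.Perm.one_apply, e1, e2, hp, hσ.sign]
    simp [neg_pow b]
  · intro π _ hπ
    simp only [Finset.mem_insert, Finset.mem_singleton, not_or] at hπ
    have : ¬ ∀ j, π j = j ∨ π j = σ j := fun h =>
      (perm_eq_of_cycle σ π hσ h).elim hπ.2 hπ.1
    push Not at this
    obtain ⟨j, h1, h2⟩ := this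
    rw [Finset.prod_eq_zero (Finset.mem_univ j), mul_zero]
    simp [cycMat, h1, h2]

lemma cyc_noncommProd {n r : ℕ} (a b : ℂ) (C : Fin r → Equiv.Perm (Fin n))
    (hcyc : ∀ i, (C i).IsCycle)
    (hdisj : ∀ i j, i ≠ j → (C i).Disjoint (C j)) (s : Finset (Fin r))
    (hc : (s : Set (Fin r)).Pairwise (Function.onFun Commute C)) :
    (cycMat a b (s.noncommProd C hc)).det
      = ∏ i ∈ s, (-(-b) ^ (C i).support.card + a ^ (C i).support.card) ∧
    (s.noncommProd C hc).support.card
      = ∑ i ∈ s, (C i).support.card := by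
  induction s using Finset.induction_on with
  | empty =>
    rw [Finset.noncommProd_empty]
    simp [cycMat_one]
  | insert x s hx ih =>
    rw [Finset.noncommProd_insert_of_notMem _ _ _ _ hx]
    have hc' : (s : Set (Fin r)).Pairwise (Function.onFun Commute C) :=
      fun i _ j _ hij => (hdisj i j hij).commute
    specialize ih hc'
    have hd : (C x).Disjoint (s.noncommProd C hc') := by
      apply Equiv.Perm.disjoint_noncommProd_right
      intro j hj
      exact hdisj _ _ (fun e => hx (e ▸ hj))
    rw [cycMat_mul _ _ _ _ hd, Matrix.det_mul, ih.1, det_cycMat_cycle _ _ _ (hcyc x),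
      hd.card_support_mul, ih.2, Finset.prod_insert hx, Finset.sum_insert hx]
    exact ⟨rfl, rfl⟩

lemma det_permMat {n : ℕ} (θ : Equiv.Perm (Fin n)) :
    (permMat θ).det = ((Equiv.Perm.sign θ : ℤ) : ℂ) := by
  have : permMat θ = ((θ.permMatrix ℂ).transpose) := by
    ext i j
    simp [permMat, PEquiv.toMatrix_apply, eq_comm]
  rw [this, Matrix.det_transpose, Matrix.det_permutation]

/-- If `θ⁻¹τ = C₁⋯C_r` is the disjoint cycle expression with `C_i` of
length `l_i ≥ 2` and `F = |Fix(θ⁻¹τ)|`, then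
`det(aP_θ + bP_τ) = sgn(θ)·(a+b)^F·Σ_{I ⊆ [r]} (−1)^{|I| + Σ_{i∈I} l_i} a^{n−Σ_{i∈I}l_i−F} b^{Σ_{i∈I}l_i}`. -/
theorem genMatrixFn_stmt5 (n r : ℕ) (hn : 1 ≤ n) (θ τ : Equiv.Perm (Fin n)) (a b : ℂ)
    (C : Fin r → Equiv.Perm (Fin n)) (l : Fin r → ℕ)
    (hcyc : ∀ i, (C i).IsCycle)
    (hl : ∀ i, (C i).support.card = l i)
    (hl2 : ∀ i, 2 ≤ l i)
    (hdisj : ∀ i j, i ≠ j → (C i).Disjoint (C j))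
    (hprod : (Finset.univ.noncommProd C
      (fun i _ j _ hij => (hdisj i j hij).commute)) = θ⁻¹ * τ)
    (F : ℕ) (hF : F = (Finset.univ.filter fun i => (θ⁻¹ * τ) i = i).card) :
    (a • permMat θ + b • permMat τ).det =
      ((Equiv.Perm.sign θ : ℤ) : ℂ) * (a + b) ^ F *
        ∑ I : Finset (Fin r),
          (-1 : ℂ) ^ (I.card + ∑ i ∈ I, l i) *
            a ^ (n - (∑ i ∈ I, l i) - F) * b ^ (∑ i ∈ I, l i) := by
  have hfac : a • permMat θ + b • permMat τ = permMat θ * (cycMat a b (θ⁻¹ * τ) *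
      Matrix.diagonal (fun j => if (θ⁻¹ * τ) j = j then a + b else 1)) := by
    ext i j
    rw [← Matrix.mul_assoc, Matrix.mul_diagonal, Matrix.mul_apply]
    have hτ : τ j = θ ((θ⁻¹ * τ) j) := by simp
    by_cases hj : (θ⁻¹ * τ) j = j
    · rw [hj] at hτ
      simp only [hj, cycMat, permMat, hτ, Matrix.of_apply, Matrix.add_apply, Matrix.smul_apply]
      simp
      split_ifs <;> simp
    · have e : ∀ x, cycMat a b (θ⁻¹ * τ) x j
          = a * (if x = j then 1 else 0) + b * (if x = (θ⁻¹ * τ) j then 1 else 0) := by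
        intro x; simp only [cycMat, Matrix.of_apply, if_neg hj]
      simp only [e]
      rw [col_sum, if_neg hj]
      simp [permMat]
  have hdiag : (Matrix.diagonal (fun j => if (θ⁻¹ * τ) j = j then a + b else 1)).det
      = (a + b) ^ F := by
    rw [Matrix.det_diagonal, Finset.prod_ite, hF]
    simp
  obtain ⟨h1, h2⟩ := cyc_noncommProd a b C hcyc hdisj Finset.univ
    (fun i _ j _ hij => (hdisj i j hij).commute)
  rw [hprod] at h1 h2
  simp only [hl] at h1 h2
  have hn' : (θ⁻¹ * τ).support.card + F = n := by
    have := Finset.card_filter_add_card_filter_not (s := (Finset.univ : Finset (Fin n)))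
      (fun i => (θ⁻¹ * τ) i = i)
    rw [Finset.card_univ, Fintype.card_fin] at this
    rw [hF, Equiv.Perm.support, add_comm]
    exact this
  rw [hfac, Matrix.det_mul, Matrix.det_mul, hdiag, h1, det_permMat, Finset.prod_add,
    Finset.powerset_univ, mul_assoc, mul_comm _ ((a + b) ^ F)]
  congr 2
  apply Finset.sum_congr rfl
  intro I _
  have hs := Finset.sum_sdiff (f := l) (Finset.subset_univ I)
  have he : n - (∑ i ∈ I, l i) - F = ∑ i ∈ Finset.univ \ I, l i := by omega
  have hneg : ∏ i ∈ I, -(-b) ^ l i = (-1 : ℂ) ^ I.card * ((-b) ^ (∑ i ∈ I, l i)) := by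
    rw [Finset.prod_neg, Finset.prod_pow_eq_pow_sum]
  rw [he, hneg, Finset.prod_pow_eq_pow_sum, neg_pow b, pow_add]
  ring
end

section
/- Let n ≥ 1, let θ, τ be permutations of {1,…,n}, and let a, b ∈ ℂ. Suppose θ⁻¹τ = C₁⋯C_r is the disjoint cycle expression of θ⁻¹τ, where C_i is a cycle of length l_i ≥ 2, and let F = |Fix(θ⁻¹τ)|. Then per(aP_θ + bP_τ) = (a+b)^F · Σ_{I ⊆ {1,…,r}} a^{n − Σ_{i∈I} l_i − F} · b^{Σ_{i∈I} l_i}. -/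
open Finset

/-- The permanent of an `n × n` complex matrix. -/
noncomputable def perm' {n : ℕ} (A : Matrix (Fin n) (Fin n) ℂ) : ℂ :=
  ∑ σ : Equiv.Perm (Fin n), ∏ i, A i (σ i)

lemma aux_ncp {n r : ℕ} (C : Fin r → Equiv.Perm (Fin n))
    (hdisj : ∀ i j, i ≠ j → (C i).Disjoint (C j)) (s : Finset (Fin r))
    (hc : (s : Set (Fin r)).Pairwise (Function.onFun Commute C)) (x : Fin n) :
    (∀ i ∈ s, C i x ≠ x →
      s.noncommProd C hc x = C i x) ∧
    ((∀ i ∈ s, C i x = x) →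
      s.noncommProd C hc x = x) := by
  induction s using Finset.induction_on with
  | empty => simp
  | insert k s hk ih =>
    rw [Finset.noncommProd_insert_of_notMem _ _ _ _ hk]
    obtain ⟨ih1, ih2⟩ := ih (fun i _ j _ hij => (hdisj i j hij).commute)
    refine ⟨?_, ?_⟩
    · intro i hi hx
      rw [Equiv.Perm.mul_apply]
      rcases Finset.mem_insert.1 hi with rfl | hi
      · rw [ih2]
        intro j hj
        have hij : i ≠ j := by rintro rfl; exact hk hj
        exact (hdisj i j hij x).resolve_left hx
      · rw [ih1 i hi hx]
        have hij : i ≠ k := by rintro rfl; contradiction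
        refine (hdisj i k hij (C i x)).resolve_left ?_
        intro h
        exact hx ((C i).injective h)
    · intro h
      rw [Equiv.Perm.mul_apply, ih2 (fun i hi => h i (Finset.mem_insert_of_mem hi)),
        h k (Finset.mem_insert_self _ _)]

lemma aux_reindex {n : ℕ} (θ τ : Equiv.Perm (Fin n)) (a b : ℂ) :
    perm' (a • permMat θ + b • permMat τ) =
      ∑ ρ : Equiv.Perm (Fin n), ∏ j, ((if ρ j = j then a else 0) +
        (if ρ j = (θ⁻¹ * τ) j then b else 0)) := by
  unfold perm'
  rw [← Equiv.sum_comp ((Equiv.mulLeft θ).trans (Equiv.inv (Equiv.Perm (Fin n))))]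
  refine Finset.sum_congr rfl fun σ _ => ?_
  rw [← Equiv.prod_comp (θ * σ)]
  refine Finset.prod_congr rfl fun j _ => ?_
  have h1 : θ (σ j) = τ j ↔ σ j = θ⁻¹ (τ j) := by
    rw [Equiv.Perm.eq_inv_iff_eq]
  have h2 : (θ * σ)⁻¹ ((θ * σ) j) = j := by simp
  simp only [Equiv.trans_apply, Equiv.coe_mulLeft, Equiv.inv_apply, h2]
  simp only [permMat, Matrix.add_apply, Matrix.smul_apply, Matrix.of_apply,
    Equiv.Perm.mul_apply, h1, EmbeddingLike.apply_eq_iff_eq, smul_eq_mul, mul_ite, mul_one,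
    mul_zero]
  congr

/-- If `θ⁻¹τ = C₁⋯C_r` is the disjoint cycle expression with `C_i` of
length `l_i ≥ 2` and `F = |Fix(θ⁻¹τ)|`, then
`per(aP_θ + bP_τ) = (a+b)^F · Σ_{I ⊆ [r]} a^{n−Σ_{i∈I}l_i−F} b^{Σ_{i∈I}l_i}`. -/
theorem genMatrixFn_stmt6 (n r : ℕ) (hn : 1 ≤ n) (θ τ : Equiv.Perm (Fin n)) (a b : ℂ)
    (C : Fin r → Equiv.Perm (Fin n)) (l : Fin r → ℕ)
    (hcyc : ∀ i, (C i).IsCycle)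
    (hl : ∀ i, (C i).support.card = l i)
    (hl2 : ∀ i, 2 ≤ l i)
    (hdisj : ∀ i j, i ≠ j → (C i).Disjoint (C j))
    (hprod : (Finset.univ.noncommProd C
      (fun i _ j _ hij => (hdisj i j hij).commute)) = θ⁻¹ * τ)
    (F : ℕ) (hF : F = (Finset.univ.filter fun i => (θ⁻¹ * τ) i = i).card) :
    perm' (a • permMat θ + b • permMat τ) =
      (a + b) ^ F *
        ∑ I : Finset (Fin r),
          a ^ (n - (∑ i ∈ I, l i) - F) * b ^ (∑ i ∈ I, l i) := by
  rw [aux_reindex, Finset.mul_sum]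
  generalize θ⁻¹ * τ = π at *
  have hπ1 : ∀ i x, C i x ≠ x → π x = C i x := fun i x hx => by
    rw [← hprod]; exact (aux_ncp C hdisj univ _ x).1 i (mem_univ _) hx
  have hπ2 : ∀ x, (∀ i, C i x = x) → π x = x := fun x hx => by
    rw [← hprod]; exact (aux_ncp C hdisj univ _ x).2 (fun i _ => hx i)
  set R : Finset (Fin r) → Equiv.Perm (Fin n) := fun s =>
    s.noncommProd C (fun i _ j _ hij => (hdisj i j hij).commute) with hR
  have hR1 : ∀ s x, ∀ i ∈ s, C i x ≠ x → R s x = C i x := fun s x => (aux_ncp C hdisj s _ x).1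
  have hR2 : ∀ s x, (∀ i ∈ s, C i x = x) → R s x = x := fun s x => (aux_ncp C hdisj s _ x).2
  clear_value R
  have huniq : ∀ i j x, C i x ≠ x → C j x ≠ x → i = j := by
    intro i j x h1 h2
    by_contra hij
    exact (hdisj i j hij x).elim h1 h2
  have hmem : ∀ s i x, C i x ≠ x → (R s x ≠ x ↔ i ∈ s) := by
    intro s i x hx
    constructor
    · intro h
      by_contra his
      apply h
      apply hR2
      intro j hj
      by_contra hjx
      exact his (huniq i j x hx hjx ▸ hj)
    · intro h
      rw [hR1 s x i h hx]; exact hx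
  symm
  refine Finset.sum_of_injOn R ?_ (fun _ _ => Finset.mem_coe.2 (Finset.mem_univ _)) ?_ ?_
  · intro s _ t _ hst
    ext i
    obtain ⟨x, hx, -⟩ := hcyc i
    rw [← hmem s i x hx, ← hmem t i x hx, hst]
  · intro ρ _ hρ
    by_contra hne
    apply hρ
    have hch : ∀ j, ρ j = j ∨ ρ j = π j := by
      intro j
      by_contra hj
      push Not at hj
      apply hne
      apply Finset.prod_eq_zero (Finset.mem_univ j)
      simp [hj.1, hj.2]
    have hstep : ∀ i x, C i x ≠ x → ρ x = C i x → ∀ k : ℕ,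
        ρ ((C i ^ k) x) = C i ((C i ^ k) x) := by
      intro i x hx hρx k
      induction k with
      | zero => simpa using hρx
      | succ k ih =>
        have hk : C i ((C i ^ k) x) ≠ (C i ^ k) x := by
          rw [← Equiv.Perm.mul_apply, ← pow_succ', pow_succ, Equiv.Perm.mul_apply]
          intro h
          exact hx ((C i ^ k).injective h)
        rw [pow_succ', Equiv.Perm.mul_apply]
        generalize (C i ^ k) x = y at *
        have hk2 : C i (C i y) ≠ C i y := fun h => hk ((C i).injective h)
        rcases hch (C i y) with h | h
        · rw [← ih] at h
          exact absurd (ih.symm.trans (ρ.injective h)) hk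
        · rw [h, hπ1 i _ hk2]
    classical
    refine ⟨Finset.univ.filter fun i => ∃ x, C i x ≠ x ∧ ρ x = C i x, by simp, ?_⟩
    ext x
    congr 1
    by_cases hx : ∃ i, C i x ≠ x
    · obtain ⟨i, hi⟩ := hx
      by_cases hm : ∃ x, C i x ≠ x ∧ ρ x = C i x
      · rw [hR1 _ x i (by simpa using hm) hi]
        obtain ⟨y, hy, hρy⟩ := hm
        obtain ⟨k, hk⟩ := (hcyc i).exists_pow_eq hy hi
        have := hstep i y hy hρy k
        rw [hk] at this
        exact this.symm
      · have h1 := (not_congr (hmem (Finset.univ.filter fun i => ∃ x, C i x ≠ x ∧ ρ x = C i x)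
          i x hi)).2 (by simpa using hm)
        rw [not_not.1 h1]
        rcases hch x with h | h
        · exact h.symm
        · exact absurd ⟨x, hi, h.trans (hπ1 i x hi)⟩ hm
    · push Not at hx
      rw [hR2 _ x (fun i _ => hx i)]
      rcases hch x with h | h
      · exact h.symm
      · rw [h, hπ2 x hx]
  · intro s _
    set T := s.biUnion fun i => (C i).support with hT
    have hTm : ∀ x, x ∈ T ↔ ∃ i ∈ s, C i x ≠ x := by simp [hT]
    have hTc : T.card = ∑ i ∈ s, l i := by
      rw [hT, Finset.card_biUnion]
      · exact Finset.sum_congr rfl fun i _ => hl i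
      · intro i _ j _ hij
        exact (hdisj i j hij).disjoint_support
    set Fx := Finset.univ.filter fun i => π i = i with hFx
    have hd : Disjoint T Fx := by
      rw [Finset.disjoint_left]
      intro x hx hx2
      obtain ⟨i, _, hi⟩ := (hTm x).1 hx
      simp only [hFx, Finset.mem_filter, Finset.mem_univ, true_and] at hx2
      rw [hπ1 i x hi] at hx2
      exact hi hx2
    have hcc : (T ∪ Fx)ᶜ.card = n - (∑ i ∈ s, l i) - F := by
      rw [Finset.card_compl, Finset.card_union_of_disjoint hd, hTc, hF, Fintype.card_fin]
      omega
    rw [← Finset.prod_mul_prod_compl (T ∪ Fx), Finset.prod_union hd, ← hcc, ← hTc, hF]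
    have e1 : ∀ x ∈ T, ((if R s x = x then a else 0) + (if R s x = π x then b else 0)) = b := by
      intro x hx
      obtain ⟨i, his, hi⟩ := (hTm x).1 hx
      simp [hR1 s x i his hi, hπ1 i x hi, hi]
    have e0 : ∀ x, x ∉ T → R s x = x := by
      intro x hx
      apply hR2
      intro i hi
      by_contra h
      exact hx ((hTm x).2 ⟨i, hi, h⟩)
    have e2 : ∀ x ∈ Fx,
        ((if R s x = x then a else 0) + (if R s x = π x then b else 0)) = a + b := by
      intro x hx
      have h1 := e0 x (Finset.disjoint_right.1 hd hx)
      have h2 : π x = x := by simpa [hFx] using hx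
      simp [h1, h2]
    have e3 : ∀ x ∈ (T ∪ Fx)ᶜ,
        ((if R s x = x then a else 0) + (if R s x = π x then b else 0)) = a := by
      intro x hx
      simp only [Finset.mem_compl, Finset.mem_union, not_or] at hx
      have h1 := e0 x hx.1
      have h2 : ¬ x = π x := by
        intro h; exact hx.2 (by simpa [hFx] using h.symm)
      simp [h1, h2]
    rw [Finset.prod_congr rfl e1, Finset.prod_congr rfl e2, Finset.prod_congr rfl e3]
    simp only [Finset.prod_const]
    ring
end

section
/- Let n ≥ 1, let θ, τ be permutations of {1,…,n} such that θ⁻¹τ is an n-cycle, and let a, b ∈ ℂ. Then det(aP_θ + bP_τ) = sgn(θ)·(a^n + (−1)^{n+1} b^n) = det(aP_θ) + det(bP_τ), and per(aP_θ + bP_τ) = a^n + b^n = per(aP_θ) + per(bP_τ). -/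
open Finset

theorem dichotomy_aux {n : ℕ} (θ τ σ : Equiv.Perm (Fin n))
    (hcyc : (θ⁻¹ * τ).IsCycle) (hfix : ∀ j, τ j ≠ θ j)
    (h : ∀ i, σ i = θ i ∨ σ i = τ i) : σ = θ ∨ σ = τ := by
  by_cases hall : ∀ i, σ i = θ i
  · left; ext1 i; exact hall i
  · right
    push Not at hall
    obtain ⟨x, hx⟩ := hall
    have hne : ∀ y, (θ⁻¹ * τ) y ≠ y := by
      intro y hy
      apply hfix y
      rw [Equiv.Perm.mul_apply, Equiv.Perm.inv_eq_iff_eq] at hy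
      exact hy
    have hstep : ∀ k : ℕ, σ (((θ⁻¹ * τ) ^ k) x) = τ (((θ⁻¹ * τ) ^ k) x) := by
      intro k
      induction k with
      | zero => simpa using (h x).resolve_left hx
      | succ k ih =>
        rw [pow_succ', Equiv.Perm.mul_apply]
        generalize ((θ⁻¹ * τ) ^ k) x = y at ih
        refine (h _).resolve_left ?_
        intro hc
        have h2 : θ ((θ⁻¹ * τ) y) = τ y := by simp
        rw [h2, ← ih] at hc
        exact hne y (σ.injective hc)
    ext1 y
    obtain ⟨k, hk⟩ := hcyc.exists_pow_eq (hne x) (hne y)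
    rw [← hk]
    exact hstep k

theorem weighted_aux {n : ℕ} (θ τ : Equiv.Perm (Fin n)) (a b : ℂ)
    (hcyc : (θ⁻¹ * τ).IsCycle) (hfix : ∀ j, τ j ≠ θ j) (hne : θ ≠ τ)
    (f : Equiv.Perm (Fin n) → ℂ) :
    ∑ σ : Equiv.Perm (Fin n), f σ * ∏ i, (a • permMat θ + b • permMat τ) (σ i) i
      = f θ * a ^ n + f τ * b ^ n := by
  rw [← Finset.sum_subset (Finset.subset_univ {θ, τ}), Finset.sum_pair hne]
  · have hfix' : ∀ j, θ j ≠ τ j := fun j => (hfix j).symm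
    simp [permMat, hfix, hfix']
  · intro σ _ hσ
    by_contra hc
    apply hσ
    have hp := right_ne_zero_of_mul hc
    rw [Finset.prod_ne_zero_iff] at hp
    have := dichotomy_aux θ τ σ hcyc hfix (by
      intro i
      have := hp i (Finset.mem_univ i)
      by_contra hcon
      push Not at hcon
      apply this
      simp [permMat, hcon.1, hcon.2])
    simpa using this

theorem perm'_eq_aux {n : ℕ} (A : Matrix (Fin n) (Fin n) ℂ) :
    perm' A = ∑ σ : Equiv.Perm (Fin n), 1 * ∏ i, A (σ i) i := by
  have h := Matrix.permanent_transpose A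
  simp only [Matrix.permanent, Matrix.transpose_apply] at h
  simp only [perm', one_mul]
  exact h

/-- If `θ⁻¹τ` is an `n`-cycle, then
`det(aP_θ + bP_τ) = sgn(θ)(a^n + (−1)^{n+1}b^n) = det(aP_θ) + det(bP_τ)` and
`per(aP_θ + bP_τ) = a^n + b^n = per(aP_θ) + per(bP_τ)`. -/
theorem genMatrixFn_stmt7 (n : ℕ) (hn : 1 ≤ n) (θ τ : Equiv.Perm (Fin n)) (a b : ℂ)
    (hcyc : (θ⁻¹ * τ).IsCycle) (hcard : (θ⁻¹ * τ).support.card = n) :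
    ((a • permMat θ + b • permMat τ).det =
        ((Equiv.Perm.sign θ : ℤ) : ℂ) * (a ^ n + (-1 : ℂ) ^ (n + 1) * b ^ n) ∧
      (a • permMat θ + b • permMat τ).det = (a • permMat θ).det + (b • permMat τ).det) ∧
    (perm' (a • permMat θ + b • permMat τ) = a ^ n + b ^ n ∧
      perm' (a • permMat θ + b • permMat τ) = perm' (a • permMat θ) + perm' (b • permMat τ)) := by
  have hfix : ∀ j, τ j ≠ θ j := by
    have hu : (θ⁻¹ * τ).support = Finset.univ := by
      rw [← Finset.card_eq_iff_eq_univ, hcard, Fintype.card_fin]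
    intro j hj
    have hm : j ∈ (θ⁻¹ * τ).support := by rw [hu]; exact Finset.mem_univ j
    rw [Equiv.Perm.mem_support] at hm
    apply hm
    simp [hj]
  have hne : θ ≠ τ := by
    rintro rfl
    exact hcyc.ne_one (by simp)
  have hn0 : n ≠ 0 := by omega
  have hdet : ∀ a b : ℂ, (a • permMat θ + b • permMat τ).det =
      ((Equiv.Perm.sign θ : ℤ) : ℂ) * a ^ n + ((Equiv.Perm.sign τ : ℤ) : ℂ) * b ^ n := by
    intro a b
    rw [Matrix.det_apply']
    exact weighted_aux θ τ a b hcyc hfix hne (fun σ => ((Equiv.Perm.sign σ : ℤ) : ℂ))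
  have hper : ∀ a b : ℂ, perm' (a • permMat θ + b • permMat τ) = a ^ n + b ^ n := by
    intro a b
    rw [perm'_eq_aux, weighted_aux θ τ a b hcyc hfix hne (fun _ => 1)]
    simp
  have hsign : ((Equiv.Perm.sign τ : ℤ) : ℂ) =
      ((Equiv.Perm.sign θ : ℤ) : ℂ) * (-1 : ℂ) ^ (n + 1) := by
    have h1 : Equiv.Perm.sign τ = Equiv.Perm.sign θ * Equiv.Perm.sign (θ⁻¹ * τ) := by
      rw [← map_mul, mul_inv_cancel_left]
    rw [h1, hcyc.sign, hcard]
    push_cast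
    ring
  have d1 := hdet a 0
  have d2 := hdet 0 b
  have p1 := hper a 0
  have p2 := hper 0 b
  simp only [zero_smul, add_zero, zero_add, zero_pow hn0, mul_zero] at d1 d2 p1 p2
  refine ⟨⟨?_, ?_⟩, hper a b, ?_⟩
  · rw [hdet, hsign]; ring
  · rw [hdet, d1, d2]
  · rw [hper, p1, p2]
end

section
/- Let n ≥ 1, let θ, τ be permutations of {1,…,n}, and let a, b ∈ ℂ. Suppose that the disjoint cycle expression of θ⁻¹τ consists of exactly r cycles, all of the same length l ≥ 2, and let F = |Fix(θ⁻¹τ)|. Then det(aP_θ + bP_τ) = sgn(θ) · (a^l + (−1)^{l+1} b^l)^r · (a+b)^F, and per(aP_θ + bP_τ) = (a^l + b^l)^r · (a+b)^F. -/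
open Finset

namespace GMF
open Equiv.Perm

variable {n r : ℕ} (C : Fin r → Equiv.Perm (Fin n))
  (hdisj : ∀ i j, i ≠ j → (C i).Disjoint (C j))

lemma pw (C : Fin r → Equiv.Perm (Fin n)) (hdisj : ∀ i j, i ≠ j → (C i).Disjoint (C j)) (T : Finset (Fin r)) : (T : Set (Fin r)).Pairwise (Function.onFun Commute C) :=
  fun i _ j _ hij => (hdisj i j hij).commute

/-- The product of the cycles indexed by `T`. -/
def rho (T : Finset (Fin r)) : Equiv.Perm (Fin n) :=
  T.noncommProd C (pw C hdisj T)

lemma rho_not (T : Finset (Fin r)) (j : Fin n) (h : ∀ i ∈ T, C i j = j) :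
    rho C hdisj T j = j := by
  induction T using Finset.induction_on with
  | empty => simp [rho]
  | insert k T hk ih =>
    have e : rho C hdisj (insert k T) = C k * rho C hdisj T :=
      Finset.noncommProd_insert_of_notMem _ _ _ _ hk
    rw [e, Equiv.Perm.mul_apply, ih (fun i hi => h i (Finset.mem_insert_of_mem hi)),
      h k (Finset.mem_insert_self _ _)]

lemma other {i k : Fin r} (hdisj : ∀ i j, i ≠ j → (C i).Disjoint (C j))
    (j : Fin n) (hj : C i j ≠ j) (hk : k ≠ i) : C k j = j :=
  (hdisj k i hk j).resolve_right hj

lemma rho_notMem (T : Finset (Fin r)) {i : Fin r} (hi : i ∉ T) (j : Fin n) (hj : C i j ≠ j) :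
    rho C hdisj T j = j :=
  rho_not C hdisj T j fun k hk => other C hdisj j hj (by rintro rfl; exact hi hk)

lemma rho_mem (T : Finset (Fin r)) {i : Fin r} (hi : i ∈ T) (j : Fin n) (hj : C i j ≠ j) :
    rho C hdisj T j = C i j := by
  have e : rho C hdisj T = C i * rho C hdisj (T.erase i) :=
    (Finset.mul_noncommProd_erase T hi C _ ).symm
  rw [e, Equiv.Perm.mul_apply, rho_notMem C hdisj _ (Finset.notMem_erase i T) j hj]

lemma main (hcyc : ∀ i, (C i).IsCycle) (l : ℕ) (hl : ∀ i, (C i).support.card = l)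
    (a b c : ℂ) (χ : Equiv.Perm (Fin n) →* ℂ) (hχ : ∀ i, χ (C i) = c) :
    ∑ ρ : Equiv.Perm (Fin n), χ ρ * ∏ j, ((if ρ j = j then a else 0) +
      (if ρ j = rho C hdisj univ j then b else 0)) =
    (a ^ l + c * b ^ l) ^ r * (a + b) ^ (univ.filter fun j => rho C hdisj univ j = j).card := by
  set π := rho C hdisj univ with hπ
  have hπi : ∀ i j, C i j ≠ j → π j = C i j := fun i j hj => rho_mem C hdisj _ (mem_univ i) j hj
  have hex : ∀ j, π j ≠ j → ∃ i, C i j ≠ j := by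
    intro j hj
    by_contra! h
    exact hj (rho_not C hdisj _ j fun i _ => h i)
  have hnot : ∀ T j, π j = j → rho C hdisj T j = j := by
    intro T j hj
    apply rho_not
    intro i _
    by_contra h
    exact h ((hπi i j h).symm.trans hj)
  have hsupp : (univ.filter fun j => ¬ π j = j) = univ.biUnion fun i => (C i).support := by
    ext j
    simp only [mem_filter, mem_univ, true_and, mem_biUnion, Equiv.Perm.mem_support]
    exact ⟨hex j, fun ⟨i, hi⟩ h => hi ((hπi i j hi).symm.trans h)⟩
  have hw : ∀ T : Finset (Fin r), ∏ j, ((if rho C hdisj T j = j then a else 0) +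
      (if rho C hdisj T j = π j then b else 0)) =
      (∏ i, if i ∈ T then b ^ l else a ^ l) * (a + b) ^ (univ.filter fun j => π j = j).card := by
    intro T
    rw [← Finset.prod_filter_mul_prod_filter_not univ (fun j => π j = j), mul_comm, hsupp,
      Finset.prod_biUnion]
    · congr 1
      · refine Finset.prod_congr rfl fun i _ => ?_
        split_ifs with hi
        · rw [← hl i, ← Finset.prod_const]
          refine Finset.prod_congr rfl fun j hj => ?_
          rw [Equiv.Perm.mem_support] at hj
          rw [rho_mem C hdisj T hi j hj, hπi i j hj]
          simp [hj]
        · rw [← hl i, ← Finset.prod_const]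
          refine Finset.prod_congr rfl fun j hj => ?_
          rw [Equiv.Perm.mem_support] at hj
          rw [rho_notMem C hdisj T hi j hj, hπi i j hj]
          simp [hj.symm]
      · rw [← Finset.prod_const]
        refine Finset.prod_congr rfl fun j hj => ?_
        have hj := (mem_filter.1 hj).2
        rw [hnot T j hj, hj]
        simp
    · intro i _ k _ hik
      exact (hdisj i k hik).disjoint_support
  have hc : ∀ T, χ (rho C hdisj T) = ∏ i ∈ T, c := by
    intro T
    rw [rho, Finset.map_noncommProd, Finset.noncommProd_eq_prod]
    exact Finset.prod_congr rfl fun i _ => hχ i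
  have hlhs : (a ^ l + c * b ^ l) ^ r = ∑ T ∈ (univ : Finset (Fin r)).powerset,
      (∏ i ∈ T, c) * ∏ i, if i ∈ T then b ^ l else a ^ l := by
    have := Finset.prod_add (fun _ : Fin r => c * b ^ l) (fun _ => a ^ l) univ
    rw [Finset.prod_const, Finset.card_univ, Fintype.card_fin] at this
    rw [add_comm, this]
    refine Finset.sum_congr rfl fun T _ => ?_
    rw [Finset.prod_mul_distrib, mul_assoc, Finset.prod_ite]
    congr 2
    · simp
    · refine Finset.prod_congr ?_ fun _ _ => rfl
      ext; simp
  rw [hlhs, Finset.sum_mul]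
  symm
  refine Finset.sum_of_injOn (rho C hdisj) ?_ (fun _ _ => by simp) ?_ ?_
  · intro S _ T _ hST
    ext i
    obtain ⟨j, hj, _⟩ := hcyc i
    have := congrArg (fun σ => σ j) hST
    by_cases hS : i ∈ S <;> by_cases hT : i ∈ T 
    · simp [hS, hT]
    · exfalso
      change rho C hdisj S j = rho C hdisj T j at this
      rw [rho_mem C hdisj _ hS j hj, rho_notMem C hdisj _ hT j hj] at this; exact hj this
    · exfalso
      change rho C hdisj S j = rho C hdisj T j at this
      rw [rho_mem C hdisj _ hT j hj, rho_notMem C hdisj _ hS j hj] at this; exact hj this.symm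
    · simp [hS, hT]
  · intro ρ _ hρ
    by_contra hne
    apply hρ
    have hp := Finset.prod_ne_zero_iff.1 (right_ne_zero_of_mul hne)
    have hor : ∀ j, ρ j = j ∨ ρ j = π j := by
      intro j
      by_contra! h
      exact hp j (mem_univ j) (by simp [h.1, h.2])
    have hstep : ∀ i j, C i j ≠ j → ρ j = C i j → ρ (C i j) = C i (C i j) := by
      intro i j hj h
      have hj2 : C i (C i j) ≠ C i j := fun h => hj ((C i).injective h)
      rcases hor (C i j) with h2 | h2
      · exact absurd (ρ.injective (h2.trans h.symm)) hj
      · rw [h2, hπi i _ hj2]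
    have hall : ∀ i j, C i j ≠ j → ρ j = C i j → ∀ k, C i k ≠ k → ρ k = C i k := by
      intro i j hj h k hk
      obtain ⟨m, rfl⟩ := ((hcyc i).sameCycle hj hk).exists_nat_pow_eq
      clear hk
      have : ∀ m : ℕ, C i ((C i ^ m) j) ≠ (C i ^ m) j ∧ ρ ((C i ^ m) j) = C i ((C i ^ m) j) := by
        intro m
        induction m with
        | zero => exact ⟨hj, h⟩
        | succ m ih =>
          rw [pow_succ', Equiv.Perm.mul_apply]
          exact ⟨fun h => ih.1 ((C i).injective h), hstep i _ ih.1 ih.2⟩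
      exact (this m).2
    classical
    refine ⟨univ.filter fun i => ∃ j, C i j ≠ j ∧ ρ j = C i j, by simp, ?_⟩
    ext1 k
    by_cases hk : π k = k
    · rw [hnot _ k hk]
      rcases hor k with h | h
      · exact h.symm
      · rw [h, hk]
    · obtain ⟨i, hi⟩ := hex k hk
      by_cases hT : ∃ j, C i j ≠ j ∧ ρ j = C i j
      · rw [rho_mem C hdisj _ (i := i) (by simpa using hT) k hi]
        obtain ⟨j, hj, h⟩ := hT
        exact (hall i j hj h k hi).symm
      · rw [rho_notMem C hdisj _ (i := i) (by simpa using hT) k hi]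
        rcases hor k with h | h
        · exact h.symm
        · exact absurd ⟨k, hi, h.trans (hπi i k hi)⟩ hT
  · intro T _
    rw [hw, hc, mul_assoc]

lemma gen (θ τ : Equiv.Perm (Fin n)) (hcyc : ∀ i, (C i).IsCycle) (l : ℕ)
    (hl : ∀ i, (C i).support.card = l) (hprod : rho C hdisj univ = θ⁻¹ * τ)
    (a b c : ℂ) (χ : Equiv.Perm (Fin n) →* ℂ) (hχ : ∀ i, χ (C i) = c) :
    ∑ σ : Equiv.Perm (Fin n), χ σ * ∏ j, (a • permMat θ + b • permMat τ) (σ j) j =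
    χ θ * (a ^ l + c * b ^ l) ^ r * (a + b) ^ (univ.filter fun j => (θ⁻¹ * τ) j = j).card := by
  rw [← hprod, mul_assoc, ← main C hdisj hcyc l hl a b c χ hχ, Finset.mul_sum,
    ← Equiv.sum_comp (Equiv.mulLeft θ)]
  refine Finset.sum_congr rfl fun ρ _ => ?_
  rw [Equiv.coe_mulLeft, map_mul, mul_assoc]
  congr 2
  refine Finset.prod_congr rfl fun j _ => ?_
  have : θ (ρ j) = τ j ↔ ρ j = (θ⁻¹ * τ) j := by
    rw [Equiv.Perm.mul_apply, Equiv.Perm.eq_inv_iff_eq]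
  simp only [hprod, permMat, Matrix.add_apply, Matrix.smul_apply, Matrix.of_apply, this,
    Equiv.Perm.mul_apply θ ρ, smul_eq_mul, mul_ite, mul_one, mul_zero, θ.injective.eq_iff]

end GMF

/-- If the disjoint cycle expression of `θ⁻¹τ` consists of exactly `r`
cycles, all of the same length `l ≥ 2`, and `F = |Fix(θ⁻¹τ)|`, then
`det(aP_θ + bP_τ) = sgn(θ)·(a^l + (−1)^{l+1} b^l)^r·(a+b)^F` and
`per(aP_θ + bP_τ) = (a^l + b^l)^r·(a+b)^F`. -/
theorem genMatrixFn_stmt8 (n r l : ℕ) (hn : 1 ≤ n) (θ τ : Equiv.Perm (Fin n)) (a b : ℂ)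
    (C : Fin r → Equiv.Perm (Fin n))
    (hcyc : ∀ i, (C i).IsCycle)
    (hl : ∀ i, (C i).support.card = l)
    (hl2 : 2 ≤ l)
    (hdisj : ∀ i j, i ≠ j → (C i).Disjoint (C j))
    (hprod : (Finset.univ.noncommProd C
      (fun i _ j _ hij => (hdisj i j hij).commute)) = θ⁻¹ * τ)
    (F : ℕ) (hF : F = (Finset.univ.filter fun i => (θ⁻¹ * τ) i = i).card) :
    (a • permMat θ + b • permMat τ).det =
        ((Equiv.Perm.sign θ : ℤ) : ℂ) * (a ^ l + (-1 : ℂ) ^ (l + 1) * b ^ l) ^ r *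
          (a + b) ^ F ∧
      perm' (a • permMat θ + b • permMat τ) = (a ^ l + b ^ l) ^ r * (a + b) ^ F := by
  subst hF
  constructor
  · let χ : Equiv.Perm (Fin n) →* ℂ :=
      ((Int.castRingHom ℂ : ℤ →* ℂ).comp (Units.coeHom ℤ)).comp Equiv.Perm.sign
    have hχ : ∀ i, χ (C i) = (-1 : ℂ) ^ (l + 1) := by
      intro i
      simp [χ, (hcyc i).sign, hl i, pow_succ]
    have := GMF.gen C hdisj θ τ hcyc l hl hprod a b _ χ hχ
    rw [Matrix.det_apply']
    exact this
  · have := GMF.gen C hdisj θ τ hcyc l hl hprod a b 1 1 (fun _ => rfl)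
    simp only [MonoidHom.one_apply, one_mul] at this
    rw [← this, perm']
    exact Matrix.permanent_transpose _
end

section
/- Let n ≥ 1, let a, b ∈ ℂ, and let θ, τ be permutations of {1,…,n}. Then aP_θ + bP_τ is positive semidefinite if and only if there exist real numbers k, m with k ≥ |m| and a permutation π of {1,…,n} with π = π⁻¹ such that aP_θ + bP_τ = kI + mP_π. -/
open ComplexOrder

lemma pm_apply {n : ℕ} (θ : Equiv.Perm (Fin n)) (i j : Fin n) :
    permMat θ i j = if i = θ j then 1 else 0 := rfl

lemma pm_one {n : ℕ} : permMat (1 : Equiv.Perm (Fin n)) = 1 := by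
  ext i j
  rw [pm_apply, Matrix.one_apply]
  rfl

lemma pm_mul {n : ℕ} (θ τ : Equiv.Perm (Fin n)) :
    permMat θ * permMat τ = permMat (θ * τ) := by
  ext i j
  simp [pm_apply, Matrix.mul_apply]
  rfl

lemma pm_conj {n : ℕ} (π : Equiv.Perm (Fin n)) (h : π = π⁻¹) :
    (permMat π).conjTranspose = permMat π := by
  ext i j
  have h1 : (j = π i) ↔ (i = π j) := by
    conv_lhs => rw [h]
    rw [Equiv.Perm.eq_inv_iff_eq, eq_comm]
  simp only [Matrix.conjTranspose_apply, pm_apply, h1]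
  split_ifs <;> simp

lemma pm_back {n : ℕ} (k m : ℝ) (π : Equiv.Perm (Fin n)) (hk : |m| ≤ k) (h : π = π⁻¹) :
    ((k : ℂ) • (1 : Matrix (Fin n) (Fin n) ℂ) + (m : ℂ) • permMat π).PosSemidef := by
  have hc := pm_conj π h
  have hs : permMat π * permMat π = 1 := by
    rw [pm_mul, ← pm_one]
    congr 1
    nth_rewrite 1 [h]
    simp
  have h1 := Matrix.posSemidef_conjTranspose_mul_self (1 + permMat π)
  have h2 := Matrix.posSemidef_conjTranspose_mul_self (1 - permMat π)
  have e1 : (0:ℂ) ≤ (((k + m)/4 : ℝ) : ℂ) := by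
    have := neg_abs_le m
    exact Complex.zero_le_real.2 (by linarith)
  have e2 : (0:ℂ) ≤ (((k - m)/4 : ℝ) : ℂ) := by
    have := le_abs_self m
    exact Complex.zero_le_real.2 (by linarith)
  have h3 := (h1.smul e1).add (h2.smul e2)
  convert h3 using 1
  rw [Matrix.conjTranspose_add, Matrix.conjTranspose_sub, hc, Matrix.conjTranspose_one]
  simp only [add_mul, mul_add, sub_mul, mul_sub, hs, one_mul, mul_one]
  push_cast
  module

lemma psd_diag {n : ℕ} {A : Matrix (Fin n) (Fin n) ℂ} (hA : A.PosSemidef) (i : Fin n) :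
    A i i = ((A i i).re : ℂ) ∧ 0 ≤ (A i i).re := by
  have h := hA.diag_nonneg (i := i)
  rw [Complex.le_def] at h
  refine ⟨Complex.ext (by simp) (by simpa using h.2.symm), by simpa using h.1⟩

lemma psd_minor {n : ℕ} {A : Matrix (Fin n) (Fin n) ℂ} (hA : A.PosSemidef) (i j : Fin n) :
    ‖A i j‖ ^ 2 ≤ (A i i).re * (A j j).re := by
  have h := (hA.submatrix ![i, j]).det_nonneg
  rw [Matrix.det_fin_two] at h
  simp only [Matrix.submatrix_apply, Matrix.cons_val_zero, Matrix.cons_val_one] at h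
  have h2 : A j i = star (A i j) := (hA.isHermitian.apply j i).symm
  rw [h2, (psd_diag hA i).1, (psd_diag hA j).1] at h
  have h3 : A i j * star (A i j) = ((‖A i j‖ ^ 2 : ℝ) : ℂ) := by
    have := Complex.mul_conj' (A i j)
    push_cast
    exact this
  rw [h3, ← Complex.ofReal_mul, ← Complex.ofReal_sub, Complex.zero_le_real] at h
  linarith

lemma psd_zero {n : ℕ} {A : Matrix (Fin n) (Fin n) ℂ} (hA : A.PosSemidef) (i j : Fin n)
    (h : A j j = 0) : A i j = 0 := by
  have := psd_minor hA i j
  rw [h] at this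
  simp at this
  exact this

def Good {n : ℕ} (A : Matrix (Fin n) (Fin n) ℂ) : Prop :=
  ∃ (k m : ℝ) (π : Equiv.Perm (Fin n)), |m| ≤ k ∧ π = π⁻¹ ∧
        A = (k : ℂ) • (1 : Matrix (Fin n) (Fin n) ℂ) + (m : ℂ) • permMat π

lemma good_scalar {n : ℕ} (hn : 1 ≤ n) (a : ℂ)
    (h : (a • (1 : Matrix (Fin n) (Fin n) ℂ)).PosSemidef) :
    Good (a • (1 : Matrix (Fin n) (Fin n) ℂ)) := by
  have := psd_diag h ⟨0, hn⟩
  simp at this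
  refine ⟨a.re, 0, 1, by simpa using this.2, by simp, ?_⟩
  rw [← this.1]
  simp

lemma good_core {n : ℕ} (hn : 1 ≤ n) (a b : ℂ) (τ : Equiv.Perm (Fin n))
    (h : (a • (1 : Matrix (Fin n) (Fin n) ℂ) + b • permMat τ).PosSemidef) :
    Good (a • (1 : Matrix (Fin n) (Fin n) ℂ) + b • permMat τ) := by
  by_cases hb : b = 0
  · subst hb
    simp only [zero_smul, add_zero] at h ⊢
    exact good_scalar hn a h
  by_cases ht : τ = 1
  · subst ht
    rw [pm_one, ← add_smul] at h ⊢
    exact good_scalar hn _ h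
  obtain ⟨j, hj⟩ : ∃ j, τ j ≠ j := by
    by_contra hc
    push Not at hc
    exact ht (Equiv.ext hc)
  have key : ∀ i j, (a • (1 : Matrix (Fin n) (Fin n) ℂ) + b • permMat τ) i j
      = (if i = j then a else 0) + (if i = τ j then b else 0) := by
    intro i j
    simp [pm_apply, Matrix.one_apply]
  have hinv : ∀ j, τ (τ j) = j := by
    intro j
    by_cases hj : τ j = j
    · rw [hj, hj]
    have h1 := h.isHermitian.apply j (τ j)
    rw [key, key] at h1
    by_contra hne
    simp [hj, Ne.symm hj, Ne.symm hne] at h1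
    exact hb h1
  have hd := psd_diag h j
  have hd' := psd_minor h (τ j) j
  have h1 := h.isHermitian.apply j (τ j)
  simp only [key] at hd hd' h1
  simp [hj, Ne.symm hj, hinv] at hd hd' h1
  have hbr : b = (b.re : ℂ) := (Complex.conj_eq_iff_re.1 h1).symm
  refine ⟨a.re, b.re, τ, ?_, ?_, by rw [← hd.1, ← hbr]⟩
  · rw [hbr] at hd'
    rw [Complex.norm_real, Real.norm_eq_abs] at hd'
    exact abs_le_of_sq_le_sq (by simpa [sq] using hd') hd.2
  · rw [eq_inv_iff_mul_eq_one]
    exact Equiv.ext hinv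

lemma comb_apply {n : ℕ} (a b : ℂ) (θ τ : Equiv.Perm (Fin n)) (i j : Fin n) :
    (a • permMat θ + b • permMat τ) i j
      = (if i = θ j then a else 0) + (if i = τ j then b else 0) := by
  simp [pm_apply]

lemma good_smul {n : ℕ} (hn : 1 ≤ n) (a : ℂ) (τ : Equiv.Perm (Fin n))
    (h : (a • permMat τ).PosSemidef) : Good (a • permMat τ) := by
  by_cases ha : a = 0
  · subst ha
    exact ⟨0, 0, 1, by simp, by simp, by simp⟩
  have ht : τ = 1 := by
    refine Equiv.ext fun j => ?_
    by_contra hj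
    have := psd_zero h (τ j) j (by simp [pm_apply]; intro h; exact absurd h.symm hj)
    simp [pm_apply] at this
    exact ha this
  subst ht
  rw [pm_one] at h ⊢
  exact good_scalar hn a h

lemma good_neg {n : ℕ} (hn : 1 ≤ n) (a b : ℂ) (hab : a + b = 0) (θ τ : Equiv.Perm (Fin n))
    (h : (a • permMat θ + b • permMat τ).PosSemidef)
    (hS : ∀ j, θ j ≠ τ j → θ j = j) : Good (a • permMat θ + b • permMat τ) := by
  have e : a • permMat θ + b • permMat τ = a • 1 + b • permMat (θ⁻¹ * τ) := by
    have hb : b = -a := by linear_combination hab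
    ext i j
    rw [← pm_one, comb_apply, comb_apply]
    by_cases hj : θ j = τ j
    · have : (θ⁻¹ * τ) j = j := by simp [← hj]
      rw [hj, this]
      rw [show (1 : Equiv.Perm (Fin n)) j = j from rfl, ← ite_add_zero, ← ite_add_zero, hab, ite_self, ite_self]
    · have h1 := hS j hj
      have θ_inv : ∀ x, θ (θ⁻¹ x) = x := fun x => θ.apply_symm_apply x
      have h2 : θ (τ j) = τ j := by
        by_cases hl : θ (θ⁻¹ (τ j)) = τ (θ⁻¹ (τ j))
        · rw [θ_inv] at hl
          have := τ.injective hl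
          exact absurd (Equiv.Perm.eq_inv_iff_eq.1 this) hj
        · have := hS _ hl
          rw [θ_inv] at this
          rw [← Equiv.Perm.eq_inv_iff_eq]
          exact this
      have h3 : (θ⁻¹ * τ) j = τ j := by
        rw [Equiv.Perm.mul_apply, Equiv.Perm.inv_eq_iff_eq, h2]
      rw [h1, h3]
      rfl
  rw [e] at h ⊢
  exact good_core hn _ _ _ h

lemma good_main {n : ℕ} (hn : 1 ≤ n) (a b : ℂ) (θ τ : Equiv.Perm (Fin n))
    (h : (a • permMat θ + b • permMat τ).PosSemidef) :
    Good (a • permMat θ + b • permMat τ) := by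
  by_cases ha : a = 0
  · subst ha
    simp only [zero_smul, zero_add] at h ⊢
    exact good_smul hn b τ h
  by_cases hb : b = 0
  · subst hb
    simp only [zero_smul, add_zero] at h ⊢
    exact good_smul hn a θ h
  have key := comb_apply a b θ τ
  have tri : ∀ j, θ j ≠ τ j → θ j = j ∨ τ j = j := by
    intro j hj
    by_contra hc
    push Not at hc
    have := psd_zero h (θ j) j (by rw [key]; simp [hc.1.symm, hc.2.symm])
    rw [key] at this
    simp [hj] at this
    exact ha this
  by_cases hab : a + b = 0
  · by_cases hex : ∃ j, θ j ≠ j ∧ τ j = j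
    · obtain ⟨j, hj1, hj2⟩ := hex
      have d := psd_diag h j
      rw [key] at d
      simp [hj1.symm, hj2] at d
      rw [add_comm] at h ⊢
      refine good_neg hn b a (by rw [add_comm, hab]) τ θ h ?_
      intro i hi
      by_contra hc
      have hi2 : θ i = i := (tri i hi.symm).resolve_right hc
      have d2 := psd_diag h i
      rw [comb_apply] at d2
      simp [Ne.symm hc, hi2] at d2
      have hre : a.re + b.re = 0 := by simpa using congrArg Complex.re hab
      have : a.re = 0 := by linarith [d.2, d2.2]
      exact ha (by rw [d2.1, this]; simp)
    · push Not at hex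
      refine good_neg hn a b hab θ τ h ?_
      intro j hj
      by_contra hc
      exact hex j hc ((tri j hj).resolve_left hc)
  · have two : ∀ j, θ j = j ∨ τ j = j := by
      intro j
      by_cases hj : θ j = τ j
      · by_contra hc
        push Not at hc
        have := psd_zero h (θ j) j (by rw [key]; simp [hc.1.symm, hc.2.symm])
        rw [key] at this
        simp [hj] at this
        exact hab this
      · exact tri j hj
    by_cases h1 : θ = 1
    · subst h1
      rw [pm_one] at h ⊢
      exact good_core hn _ _ _ h
    by_cases h2 : τ = 1
    · subst h2
      rw [pm_one, add_comm] at h ⊢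
      exact good_core hn _ _ _ h
    obtain ⟨j, hj⟩ : ∃ j, θ j ≠ j := by
      by_contra hc
      push Not at hc
      exact h1 (Equiv.ext hc)
    obtain ⟨i, hi⟩ : ∃ j, τ j ≠ j := by
      by_contra hc
      push Not at hc
      exact h2 (Equiv.ext hc)
    have hj' := (two j).resolve_left hj
    have hi' := (two i).resolve_right hi
    have hjj : θ (θ j) ≠ θ j := fun h => hj (θ.injective h)
    have hii : τ (τ i) ≠ τ i := fun h => hi (τ.injective h)
    have hjj' := (two (θ j)).resolve_left hjj
    have hii' := (two (τ i)).resolve_right hii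
    have dj := psd_diag h j
    have di := psd_diag h i
    have mj := psd_minor h (θ j) j
    have mi := psd_minor h (τ i) i
    simp only [key] at dj di mj mi
    simp [hj, hj.symm, hj', hjj.symm, hjj'] at dj mj
    simp [hi, hi.symm, hi', hii.symm, hii'] at di mi
    have hE : a = b := by
      rw [di.1, Complex.norm_real, Real.norm_eq_abs, sq_abs] at mj
      rw [dj.1, Complex.norm_real, Real.norm_eq_abs, sq_abs] at mi
      have : a.re = b.re := by nlinarith [dj.2, di.2]
      rw [di.1, dj.1, this]
    subst hE
    have e : a • permMat θ + a • permMat τ = a • 1 + a • permMat (θ * τ) := by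
      ext i j
      rw [← pm_one, comb_apply, comb_apply, Equiv.Perm.one_apply, Equiv.Perm.mul_apply]
      rcases two j with hh | hh
      · have : θ (τ j) = τ j := by
          rcases two (τ j) with h5 | h5
          · exact h5
          · rw [τ.injective h5, hh]
        rw [hh, this]
      · rw [hh, add_comm]
    rw [e] at h ⊢
    exact good_core hn _ _ _ h

/-- `aP_θ + bP_τ` is positive semidefinite if and only if
`aP_θ + bP_τ = kI + mP_π` for some reals `k ≥ |m|` and some self-inverse permutation `π`. -/
theorem genMatrixFn_stmt11 (n : ℕ) (hn : 1 ≤ n) (a b : ℂ) (θ τ : Equiv.Perm (Fin n)) :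
    (a • permMat θ + b • permMat τ).PosSemidef ↔
      ∃ (k m : ℝ) (π : Equiv.Perm (Fin n)), |m| ≤ k ∧ π = π⁻¹ ∧
        a • permMat θ + b • permMat τ =
          (k : ℂ) • (1 : Matrix (Fin n) (Fin n) ℂ) + (m : ℂ) • permMat π := by
  constructor
  · exact fun h => good_main hn a b θ τ h
  · rintro ⟨k, m, π, hk, hp, e⟩
    rw [e]
    exact pm_back k m π hk hp
end

section
/- Let n ≥ 1, let a, b ∈ ℂ and θ, τ be permutations of {1,…,n} such that A = aP_θ + bP_τ is positive semidefinite. Let G be a subgroup of S_n and let χ : G → ℂ be the character of a finite-dimensional complex representation of G. Then d_χ^G(A) is a real number and d_χ^G(A) ≤ χ(id) · per(A) (in particular, (1/χ(id)) d_χ^G(A) ≤ per(A), i.e., the permanent dominance conjecture holds for A). -/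
open Finset ComplexOrder

lemma aux_psd {n : ℕ} {A : Matrix (Fin n) (Fin n) ℂ} (h : A.PosSemidef) (i j : Fin n)
    (hij : A i j ≠ 0) : A i i ≠ 0 := by
  intro h0
  have h1 := (h.submatrix ![i, j]).det_nonneg
  rw [Matrix.det_fin_two] at h1
  have h2 : A j i = star (A i j) := (h.isHermitian.apply j i).symm
  simp only [Matrix.submatrix_apply, Matrix.cons_val_zero, Matrix.cons_val_one, h0, zero_mul,
    zero_sub, h2] at h1
  have h3 : 0 ≤ A i j * star (A i j) := mul_star_self_nonneg _
  have h4 : A i j * star (A i j) = 0 := le_antisymm (neg_nonneg.mp h1) h3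
  simp [hij] at h4

lemma aux_support {n : ℕ} {a b : ℂ} {θ τ : Equiv.Perm (Fin n)} {A : Matrix (Fin n) (Fin n) ℂ}
    (hA : A = a • permMat θ + b • permMat τ) (i j : Fin n) (hij : A i j ≠ 0) :
    j = θ.symm i ∨ j = τ.symm i := by
  by_contra hc
  push Not at hc
  apply hij
  have h1 : i ≠ θ j := fun h => hc.1 (by simp [h])
  have h2 : i ≠ τ j := fun h => hc.2 (by simp [h])
  simp [hA, permMat, h1, h2]

lemma aux_invol {n : ℕ} {a b : ℂ} {θ τ : Equiv.Perm (Fin n)} {A : Matrix (Fin n) (Fin n) ℂ}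
    (hA : A = a • permMat θ + b • permMat τ) (h : A.PosSemidef) (σ : Equiv.Perm (Fin n))
    (hσ : ∀ i, A i (σ i) ≠ 0) (i : Fin n) : σ (σ i) = i := by
  by_cases hi : σ i = i
  · simp [hi]
  have h2 : A (σ i) i ≠ 0 := by
    rw [← h.isHermitian.apply]
    simpa using hσ i
  have h3 := hσ (σ i)
  have h4 := aux_psd h _ _ h3
  have h5 : σ (σ i) ≠ σ i := fun e => hi (σ.injective e)
  have e2 := aux_support hA _ _ h2
  have e3 := aux_support hA _ _ h3
  have e4 := aux_support hA _ _ h4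
  grind

lemma aux_nonneg {n : ℕ} {A : Matrix (Fin n) (Fin n) ℂ} (h : A.PosSemidef)
    (σ : Equiv.Perm (Fin n)) (hσ : ∀ i, σ (σ i) = i) : 0 ≤ ∏ i, A i (σ i) := by
  have e1 : ∏ i, A i (σ i) = (∏ i with σ i = i, A i (σ i)) *
      ((∏ i with i < σ i, A i (σ i)) * ∏ i with σ i < i, A i (σ i)) := by
    rw [← Finset.prod_filter_mul_prod_filter_not univ (fun i => σ i = i)]
    congr 1
    rw [← Finset.prod_filter_mul_prod_filter_not _ (fun i => i < σ i), Finset.filter_filter,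
      Finset.filter_filter]
    congr 1
    · apply Finset.prod_congr _ (fun _ _ => rfl)
      ext i; simp; intro h; exact h.ne'
    · apply Finset.prod_congr _ (fun _ _ => rfl)
      ext i; simp; exact ⟨fun h => lt_of_le_of_ne h.2 h.1, fun h => ⟨h.ne, h.le⟩⟩
  have e2 : ∏ i with σ i < i, A i (σ i) = star (∏ i with i < σ i, A i (σ i)) := by
    rw [star_prod]
    refine Finset.prod_nbij' σ σ ?_ ?_ ?_ ?_ ?_
    · intro i hi; simpa [hσ] using hi
    · intro i hi; simpa [hσ] using hi
    · intro i _; exact hσ i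
    · intro i _; exact hσ i
    · intro i _; rw [hσ]; exact (h.isHermitian.apply _ _).symm
  rw [e1, e2]
  refine mul_nonneg (Finset.prod_nonneg ?_) (mul_star_self_nonneg _)
  intro i hi
  rw [(Finset.mem_filter.mp hi).2]
  exact h.diag_nonneg

lemma aux_trace {V : Type} [AddCommGroup V] [Module ℂ V] [FiniteDimensional ℂ V]
    (f : V →ₗ[ℂ] V) (hf : f * f = 1) : LinearMap.trace ℂ V f ≤ LinearMap.trace ℂ V 1 := by
  have hid : IsIdempotentElem ((2⁻¹ : ℂ) • (1 - f)) := by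
    rw [IsIdempotentElem, smul_mul_smul_comm]
    have : (1 - f) * (1 - f) = (2 : ℂ) • (1 - f) := by
      rw [two_smul, sub_mul, mul_sub, mul_sub, hf, one_mul, mul_one, one_mul]; abel
    rw [this, smul_smul]; norm_num
  have ht := (LinearMap.IsIdempotentElem.isProj_range _ hid).trace
  rw [map_smul, map_sub, smul_eq_mul] at ht
  rw [← sub_nonneg]
  have h0 : LinearMap.trace ℂ V 1 - LinearMap.trace ℂ V f =
      2 * (2⁻¹ * (LinearMap.trace ℂ V 1 - LinearMap.trace ℂ V f)) := by ring
  rw [h0, ht]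
  exact_mod_cast Nat.zero_le _

/-- Let `A = aP_θ + bP_τ` be positive semidefinite, `G ≤ S_n`, and let
`χ` be the character of a finite-dimensional complex representation of `G`. Then
`d_χ^G(A)` is real and `d_χ^G(A) ≤ χ(id) · per(A)` (permanent dominance for `A`). -/
theorem genMatrixFn_stmt12 (n : ℕ) (hn : 1 ≤ n) (a b : ℂ) (θ τ : Equiv.Perm (Fin n))
    (A : Matrix (Fin n) (Fin n) ℂ)
    (hA : A = a • permMat θ + b • permMat τ)
    (hpsd : A.PosSemidef)
    (G : Subgroup (Equiv.Perm (Fin n))) [Fintype G]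
    (V : Type) [AddCommGroup V] [Module ℂ V] [FiniteDimensional ℂ V]
    (ρ : Representation ℂ G V)
    (χ : G → ℂ) (hχ : ∀ g : G, χ g = LinearMap.trace ℂ V (ρ g)) :
    (∑ σ : G, χ σ * ∏ i, A i ((σ : Equiv.Perm (Fin n)) i)).im = 0 ∧
      ∑ σ : G, χ σ * ∏ i, A i ((σ : Equiv.Perm (Fin n)) i) ≤
        χ 1 * ∑ σ : Equiv.Perm (Fin n), ∏ i, A i (σ i) := by
  have hinv := aux_invol hA hpsd
  have hp : ∀ σ : Equiv.Perm (Fin n), 0 ≤ ∏ i, A i (σ i) := by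
    intro σ
    by_cases hs : ∀ i, A i (σ i) ≠ 0
    · exact aux_nonneg hpsd σ (hinv σ hs)
    · push Not at hs
      obtain ⟨i, hi⟩ := hs
      rw [Finset.prod_eq_zero (mem_univ i) hi]
  have hχ1 : 0 ≤ χ 1 := by
    rw [hχ, map_one, LinearMap.trace_one]
    exact Nat.cast_nonneg _
  have hterm : ∀ σ : G, χ σ * ∏ i, A i ((σ : Equiv.Perm (Fin n)) i) ≤
      χ 1 * ∏ i, A i ((σ : Equiv.Perm (Fin n)) i) := by
    intro σ
    by_cases hs : ∀ i, A i ((σ : Equiv.Perm (Fin n)) i) ≠ 0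
    · refine mul_le_mul_of_nonneg_right ?_ (hp _)
      have hσ : σ * σ = 1 := by
        apply Subtype.ext
        ext1 i
        simpa using hinv _ hs i
      rw [hχ, hχ, map_one]
      apply aux_trace
      rw [← map_mul, hσ, map_one]
    · push Not at hs
      obtain ⟨i, hi⟩ := hs
      rw [Finset.prod_eq_zero (mem_univ i) hi]
      simp
  have hle : ∑ σ : G, χ σ * ∏ i, A i ((σ : Equiv.Perm (Fin n)) i) ≤
        χ 1 * ∑ σ : Equiv.Perm (Fin n), ∏ i, A i (σ i) := by
    refine (Finset.sum_le_sum fun σ _ => hterm σ).trans ?_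
    rw [← Finset.mul_sum]
    refine mul_le_mul_of_nonneg_left ?_ hχ1
    refine (Finset.sum_map univ (Function.Embedding.subtype (· ∈ G))
      (fun σ : Equiv.Perm (Fin n) => ∏ i, A i (σ i))).symm.le.trans ?_
    exact Finset.sum_le_sum_of_subset_of_nonneg (subset_univ _) (fun σ _ _ => hp σ)
  refine ⟨?_, hle⟩
  have hR : 0 ≤ χ 1 * ∑ σ : Equiv.Perm (Fin n), ∏ i, A i (σ i) :=
    mul_nonneg hχ1 (Finset.sum_nonneg fun σ _ => hp σ)
  rw [(Complex.le_def.mp hle).2, ← (Complex.le_def.mp hR).2]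
  rfl
end

section
/- Let n ≥ 1, let G be a subgroup of S_n, let χ : G → ℂ* be a group homomorphism (a linear character of G), let θ, τ be permutations of {1,…,n}, and let a, b ∈ ℂ. Let λ₁, …, λ_n ∈ ℂ be the roots, counted with multiplicity, of the characteristic polynomial of the matrix (conj(a)·b)·P_{θ⁻¹τ}. Then |d_χ^G(aP_θ + bP_τ)|² ≤ (1/n) · Σ_{j=1}^n (|a|² + |b|² + 2·Re(λ_j))^n. -/
open Finset Polynomial

namespace GMF

open Matrix

theorem det_sub {n : ℕ} (M : Matrix (Fin n) (Fin n) ℂ) (lam : Fin n → ℂ)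
    (h : M.charpoly = ∏ j, (X - C (lam j))) (r : ℂ) :
    (aeval M (X - C r)).det = ∏ j, (lam j - r) := by
  have h1 := congrArg (eval r) h
  rw [Matrix.eval_charpoly, eval_prod] at h1
  have h2 : aeval M (X - C r) = -(scalar (Fin n) r - M) := by
    simp [Matrix.algebraMap_eq_diagonal]
  rw [h2, det_neg, h1, ← Finset.card_univ, ← Finset.prod_const, ← Finset.prod_mul_distrib]
  refine Finset.prod_congr rfl fun j _ => ?_
  simp

theorem det_aeval {n : ℕ} (M : Matrix (Fin n) (Fin n) ℂ) (lam : Fin n → ℂ)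
    (h : M.charpoly = ∏ j, (X - C (lam j))) (q : ℂ[X]) :
    (aeval M q).det = ∏ j, q.eval (lam j) := by
  have hs : ∀ s : Multiset ℂ, (aeval M (s.map fun r => X - C r).prod).det =
      ∏ j, ((s.map fun r => X - C r).prod).eval (lam j) := by
    intro s
    induction s using Multiset.induction with
    | empty => simp
    | cons r s ih =>
      rw [Multiset.map_cons, Multiset.prod_cons, map_mul, det_mul, ih, det_sub M lam h,
        ← Finset.prod_mul_distrib]
      simp
  have hq := (IsAlgClosed.splits q).eq_prod_roots
  rw [hq, map_mul, det_mul, hs]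
  simp [Finset.prod_mul_distrib, Matrix.algebraMap_eq_diagonal]

theorem trace_aeval {n : ℕ} (M : Matrix (Fin n) (Fin n) ℂ) (lam : Fin n → ℂ)
    (h : M.charpoly = ∏ j, (X - C (lam j))) (q : ℂ[X]) :
    (aeval M q).trace = ∑ j, q.eval (lam j) := by
  have h1 : (aeval M q).charpoly = ∏ j, (X - C (q.eval (lam j))) := by
    refine Polynomial.funext fun x => ?_
    rw [Matrix.eval_charpoly, eval_prod]
    have := det_aeval M lam h (C x - q)
    rw [map_sub, aeval_C] at this
    have h3 : scalar (Fin n) x = algebraMap ℂ (Matrix (Fin n) (Fin n) ℂ) x := rfl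
    rw [h3, this]
    simp
  rw [Matrix.trace_eq_sum_roots_charpoly, h1, Polynomial.roots_prod]
  · simp [List.sum_ofFn]
  · simp [Finset.prod_ne_zero_iff, Polynomial.X_sub_C_ne_zero]

theorem permMat_mul {n : ℕ} (σ τ : Equiv.Perm (Fin n)) :
    permMat σ * permMat τ = permMat (σ * τ) := by
  ext i j
  simp only [permMat, Matrix.mul_apply, Matrix.of_apply]
  rw [Finset.sum_eq_single (τ j)]
  · by_cases h : i = σ (τ j) <;> simp [h]
  · intro k _ hk; simp [hk]
  · simp

theorem permMat_one {n : ℕ} : permMat (1 : Equiv.Perm (Fin n)) = 1 := by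
  ext i j
  by_cases h : i = j <;> simp [permMat, Matrix.one_apply, h]

theorem permMat_pow {n : ℕ} (σ : Equiv.Perm (Fin n)) (k : ℕ) :
    permMat σ ^ k = permMat (σ ^ k) := by
  induction k with
  | zero => simp [permMat_one]
  | succ k ih => rw [pow_succ, ih, permMat_mul, pow_succ]

theorem permMat_conjTranspose {n : ℕ} (σ : Equiv.Perm (Fin n)) :
    (permMat σ)ᴴ = permMat σ⁻¹ := by
  ext i j
  simp only [permMat, Matrix.conjTranspose_apply, Matrix.of_apply, Equiv.Perm.eq_inv_iff_eq]
  by_cases h : σ i = j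
  · simp [h]
  · simp [h, Ne.symm h]

/-- the matrix `a + b P` -/
noncomputable def BB {n : ℕ} (σ : Equiv.Perm (Fin n)) (a b : ℂ) : Matrix (Fin n) (Fin n) ℂ :=
  a • 1 + b • permMat σ

theorem BB_conj {n : ℕ} (σ : Equiv.Perm (Fin n)) (a b : ℂ) :
    (BB σ a b)ᴴ = BB σ⁻¹ (starRingEnd ℂ a) (starRingEnd ℂ b) := by
  simp [BB, permMat_conjTranspose]

theorem HH_eq {n : ℕ} (σ : Equiv.Perm (Fin n)) (a b : ℂ) :
    (BB σ a b)ᴴ * BB σ a b = ((‖a‖ : ℂ) ^ 2 + (‖b‖ : ℂ) ^ 2) • 1 +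
      (starRingEnd ℂ a * b) • permMat σ + (a * starRingEnd ℂ b) • permMat σ⁻¹ := by
  rw [BB_conj]
  simp only [BB, add_mul, mul_add, smul_mul_smul, permMat_mul, inv_mul_cancel, permMat_one,
    one_mul, mul_one, Complex.conj_mul']
  module

theorem HH_eq' {n : ℕ} (σ : Equiv.Perm (Fin n)) (a b : ℂ) :
     Commute ((BB σ a b)ᴴ) (BB σ a b) := by
  rw [BB_conj]
  simp only [BB, Commute, SemiconjBy, add_mul, mul_add, smul_mul_smul, permMat_mul, inv_mul_cancel, 
    mul_inv_cancel, permMat_one, one_mul, mul_one]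
  module

/-- The right-hand side as a trace. -/
theorem trace_HH {n : ℕ} (σ : Equiv.Perm (Fin n)) (a b : ℂ) (lam : Fin n → ℂ)
    (hlam : ((starRingEnd ℂ a * b) • permMat σ).charpoly = ∏ j, (X - C (lam j))) (k : ℕ) :
    (((BB σ a b)ᴴ * BB σ a b) ^ k).trace =
      ((∑ j, (‖a‖ ^ 2 + ‖b‖ ^ 2 + 2 * (lam j).re) ^ k : ℝ) : ℂ) := by
  set c := starRingEnd ℂ a * b with hc
  set M := c • permMat σ with hM
  have hcc : a * starRingEnd ℂ b = starRingEnd ℂ c := by simp [hc]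
  obtain ⟨N, hN⟩ : ∃ N, orderOf σ = N + 1 :=
    Nat.exists_eq_succ_of_ne_zero (orderOf_pos σ).ne'
  have hσ : σ ^ (N + 1) = 1 := by rw [← hN, pow_orderOf_eq_one]
  have hσ' : σ⁻¹ = σ ^ N := by
    rw [inv_eq_iff_mul_eq_one, ← pow_succ', hσ]
  have hMp : ∀ m, M ^ m = c ^ m • permMat (σ ^ m) := by
    intro m; rw [hM, _root_.smul_pow, permMat_pow]
  have hl : ∀ j, lam j ^ (N + 1) = c ^ (N + 1) := by
    intro j
    have : lam j ∈ spectrum ℂ M := by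
      rw [Matrix.mem_spectrum_iff_isRoot_charpoly, hlam, IsRoot, eval_prod]
      exact Finset.prod_eq_zero (Finset.mem_univ j) (by simp)
    have h2 := spectrum.pow_mem_pow M (N + 1) this
    rw [hMp, hσ, permMat_one, ← Algebra.algebraMap_eq_smul_one] at h2
    have : Nonempty (Fin n) := ⟨j⟩
    rw [spectrum.scalar_eq] at h2
    exact h2
  have hn : ∀ j, ‖lam j‖ = ‖c‖ := by
    intro j
    have := congrArg norm (hl j)
    rw [norm_pow, norm_pow] at this
    exact (pow_left_inj₀ (norm_nonneg _) (norm_nonneg _) (Nat.succ_ne_zero N)).1 this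
  set q : ℂ[X] := C ((‖a‖ : ℂ) ^ 2 + (‖b‖ : ℂ) ^ 2) + X + C (starRingEnd ℂ c * (c ^ N)⁻¹) * X ^ N
    with hq
  have hHq : (BB σ a b)ᴴ * BB σ a b = aeval M q := by
    rw [HH_eq, hq]
    rw [map_add, map_add, map_mul, aeval_C, aeval_X, aeval_C, map_pow, aeval_X, ← hc, hcc]
    rw [hMp, ← hσ', Algebra.algebraMap_eq_smul_one, Algebra.algebraMap_eq_smul_one, smul_mul_smul,
      one_mul]
    congr 2
    by_cases h0 : c = 0
    · simp [h0]
    · field_simp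
  have hev : ∀ j, q.eval (lam j) = ((‖a‖ ^ 2 + ‖b‖ ^ 2 + 2 * (lam j).re : ℝ) : ℂ) := by
    intro j
    have h3 : starRingEnd ℂ c * (c ^ N)⁻¹ * lam j ^ N = starRingEnd ℂ (lam j) := by
      by_cases h0 : c = 0
      · have : lam j = 0 := by simpa [h0] using hn j
        simp [h0, this]
      · have h4 : lam j ≠ 0 := by
          rw [← norm_ne_zero_iff, hn, norm_ne_zero_iff]; exact h0
        apply mul_right_cancel₀ h4
        rw [Complex.conj_mul', hn, ← Complex.conj_mul', mul_assoc, ← pow_succ, hl]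
        field_simp
        ring
    simp only [hq, eval_add, eval_mul, eval_C, eval_X, eval_pow, h3]
    rw [add_assoc, Complex.add_conj]
    push_cast
    ring
  rw [hHq, ← map_pow, trace_aeval M lam hlam]
  push_cast
  refine Finset.sum_congr rfl fun j _ => ?_
  rw [eval_pow, hev]
  push_cast
  ring

end GMF

namespace GMF

open Matrix
open scoped ComplexOrder

theorem moments {n : ℕ} (B : Matrix (Fin n) (Fin n) ℂ) (i : Fin n) :
    ∃ w d : Fin n → ℝ, (∀ j, 0 ≤ w j) ∧ ∑ j, w j = 1 ∧ (∀ j, 0 ≤ d j) ∧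
      ∀ k : ℕ, ((Bᴴ * B) ^ k) i i = ((∑ j, w j * d j ^ k : ℝ) : ℂ) := by
  have hP : (Bᴴ * B).PosSemidef := Matrix.posSemidef_conjTranspose_mul_self B
  have hH := hP.isHermitian
  have key : ∀ k : ℕ, ((Bᴴ * B) ^ k) i i = ((∑ j, ‖(hH.eigenvectorUnitary : Matrix _ _ ℂ) i j‖ ^ 2 *
      hH.eigenvalues j ^ k : ℝ) : ℂ) := by
    intro k
    conv_lhs => rw [hH.spectral_theorem]
    rw [← map_pow, Unitary.conjStarAlgAut_apply, Matrix.diagonal_pow, Matrix.mul_apply]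
    push_cast
    refine Finset.sum_congr rfl fun j _ => ?_
    rw [Matrix.mul_diagonal, Matrix.star_apply, ← Complex.mul_conj']
    simp
    ring
  refine ⟨_, _, fun j => by positivity, ?_, hP.eigenvalues_nonneg, key⟩
  have := key 0
  simp only [pow_zero, Matrix.one_apply_eq, mul_one] at this
  exact_mod_cast this.symm

theorem power_mean {n : ℕ} (w d : Fin n → ℝ) (hw : ∀ j, 0 ≤ w j) (hw1 : ∑ j, w j = 1)
    (hd : ∀ j, 0 ≤ d j) (c m : ℕ) (hc : 1 ≤ c) (hcm : c ≤ m) (g : ℝ) (hg : 0 ≤ g)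
    (h : g ≤ ∑ j, w j * d j ^ c) :
    (g ^ ((c : ℝ)⁻¹)) ^ m ≤ ∑ j, w j * d j ^ m := by
  have hc0 : (0 : ℝ) < c := by exact_mod_cast hc
  have h1 : (1 : ℝ) ≤ (c : ℝ)⁻¹ * m := by
    rw [inv_mul_eq_div, le_div_iff₀ hc0, one_mul]
    exact_mod_cast hcm
  have h2 := Real.rpow_arith_mean_le_arith_mean_rpow Finset.univ w (fun j => d j ^ c)
    (fun j _ => hw j) hw1 (fun j _ => pow_nonneg (hd j) c) h1
  rw [← Real.rpow_natCast, ← Real.rpow_mul hg]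
  refine (Real.rpow_le_rpow hg h (by positivity)).trans (h2.trans (le_of_eq ?_))
  refine Finset.sum_congr rfl fun j _ => ?_
  rw [← Real.rpow_natCast, ← Real.rpow_mul (hd j), ← mul_assoc, mul_inv_cancel₀ hc0.ne', one_mul,
    Real.rpow_natCast]

theorem HH_pow_diag {n : ℕ} (σ : Equiv.Perm (Fin n)) (a b : ℂ) (i : Fin n) (k : ℕ) :
    (((BB σ a b)ᴴ * BB σ a b) ^ k) i i = ((∑ j, ‖(BB σ a b ^ k) j i‖ ^ 2 : ℝ) : ℂ) := by
  rw [(HH_eq' σ a b).mul_pow, ← Matrix.conjTranspose_pow, Matrix.mul_apply]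
  push_cast
  refine Finset.sum_congr rfl fun j _ => ?_
  rw [Matrix.conjTranspose_apply, ← Complex.conj_mul']
  rfl

theorem BB_pow_apply {n : ℕ} (σ : Equiv.Perm (Fin n)) (a b : ℂ) (i j : Fin n) (k : ℕ) :
    (BB σ a b ^ k) j i = ∑ m ∈ Finset.range (k + 1),
      if j = σ^[m] i then b ^ m * a ^ (k - m) * (k.choose m : ℂ) else 0 := by
  have hcom : Commute (b • permMat σ) (a • (1 : Matrix (Fin n) (Fin n) ℂ)) :=
    ((Commute.one_right _).smul_right a)
  rw [BB, add_comm, hcom.add_pow, Matrix.sum_apply]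
  refine Finset.sum_congr rfl fun m _ => ?_
  rw [_root_.smul_pow, _root_.smul_pow, one_pow, permMat_pow, smul_mul_smul, mul_one,
    ← nsmul_eq_mul', Matrix.smul_apply, Matrix.smul_apply, permMat, Matrix.of_apply,
    Equiv.Perm.iterate_eq_pow]
  split_ifs <;> simp [mul_comm, mul_assoc]

/-- the per-cycle factor -/
noncomputable def UU (a b : ℂ) (c : ℕ) : ℝ := if c = 1 then ‖a + b‖ else ‖a‖ ^ c + ‖b‖ ^ c

theorem UU_nonneg (a b : ℂ) (c : ℕ) : 0 ≤ UU a b c := by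
  unfold UU; split_ifs <;> positivity

theorem lower {n : ℕ} (σ : Equiv.Perm (Fin n)) (a b : ℂ) (i : Fin n) (c : ℕ)
    (hc : Function.minimalPeriod σ i = c) (hc0 : 1 ≤ c) :
    UU a b c ^ 2 ≤ ∑ j, ‖(BB σ a b ^ c) j i‖ ^ 2 := by
  have hper : σ^[c] i = i := by rw [← hc]; exact Function.iterate_minimalPeriod
  have hinj : ∀ r < c, ∀ s < c, σ^[r] i = σ^[s] i → r = s := by
    intro r hr s hs h
    exact Function.iterate_injOn_Iio_minimalPeriod (by simpa [hc] using hr)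
      (by simpa [hc] using hs) h
  have hdiag : (BB σ a b ^ c) i i = a ^ c + b ^ c := by
    rw [BB_pow_apply, Finset.sum_range_succ, hper, if_pos rfl, Finset.sum_eq_single 0]
    · simp
    · intro m hm hm0
      rw [if_neg]
      intro h
      exact hm0 (hinj m (Finset.mem_range.1 hm) 0 hc0 h.symm)
    · intro h; exact absurd (Finset.mem_range.2 hc0) h
  have hoff : ∀ r, 0 < r → r < c →
      (BB σ a b ^ c) (σ^[r] i) i = b ^ r * a ^ (c - r) * (c.choose r : ℂ) := by
    intro r hr0 hr
    rw [BB_pow_apply, Finset.sum_eq_single r]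
    · simp
    · intro m hm hm0
      rw [if_neg]
      intro h
      rcases Nat.lt_or_ge m c with h1 | h1
      · exact hm0 (hinj m h1 r hr h.symm)
      · have : m = c := by have := Finset.mem_range.1 hm; omega
        rw [this, hper] at h
        exact hr0.ne' (hinj r hr 0 hc0 h)
    · intro h; exact absurd (Finset.mem_range.2 (by omega)) h
  have hne : ∀ r, 0 < r → r < c → i ≠ σ^[r] i := fun r h0 h1 h =>
    h0.ne (hinj 0 hc0 r h1 h)
  have hx := norm_nonneg a
  have hy := norm_nonneg b
  have hnd : (‖a‖ ^ c - ‖b‖ ^ c) ^ 2 ≤ ‖a ^ c + b ^ c‖ ^ 2 := by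
    have h1 := abs_norm_sub_norm_le (a ^ c) (-b ^ c)
    rw [norm_neg, sub_neg_eq_add, norm_pow, norm_pow] at h1
    exact sq_le_sq' (by linarith [neg_le_abs (‖a‖ ^ c - ‖b‖ ^ c)]) ((le_abs_self _).trans h1)
  unfold UU
  split_ifs with h1
  · subst h1
    refine le_trans (le_of_eq ?_)
      (Finset.single_le_sum (fun j _ => by positivity) (Finset.mem_univ i))
    rw [hdiag, pow_one, pow_one]
  · rcases Nat.lt_or_ge 2 c with h2 | h2
    · have h3 : σ^[1] i ≠ σ^[c - 1] i := fun h => by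
        have := hinj 1 (by omega) (c - 1) (by omega) h
        omega
      refine le_trans ?_ (Finset.sum_le_sum_of_subset_of_nonneg
        (Finset.subset_univ {i, σ^[1] i, σ^[c - 1] i}) (fun j _ _ => by positivity))
      rw [Finset.sum_insert (by
        simp only [Finset.mem_insert, Finset.mem_singleton, not_or]
        exact ⟨hne 1 (by omega) (by omega), hne (c - 1) (by omega) (by omega)⟩),
        Finset.sum_pair h3, hdiag, hoff 1 (by omega) (by omega), hoff (c - 1) (by omega) (by omega)]
      obtain ⟨e, rfl⟩ : ∃ e, c = e + 1 := ⟨c - 1, by omega⟩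
      simp only [Nat.add_sub_cancel, Nat.choose_one_right, Nat.choose_succ_self_right, norm_mul,
        norm_pow, Complex.norm_natCast, show e + 1 - e = 1 by omega, pow_one]
      have he : (3 : ℝ) ≤ ((e + 1 : ℕ) : ℝ) := by exact_mod_cast h2
      have e1 : ‖a‖ ^ (e + 1) * ‖b‖ ^ (e + 1) = (‖b‖ * ‖a‖ ^ e) * (‖b‖ ^ e * ‖a‖) := by ring
      have p1 : 0 ≤ ‖b‖ * ‖a‖ ^ e := by positivity
      have p2 : 0 ≤ ‖b‖ ^ e * ‖a‖ := by positivity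
      generalize ‖b‖ * ‖a‖ ^ e = u at *
      generalize ‖b‖ ^ e * ‖a‖ = v at *
      have q1 : (2 * u) ^ 2 ≤ (u * ((e + 1 : ℕ) : ℝ)) ^ 2 := by
        apply pow_le_pow_left₀ (by positivity); nlinarith
      have q2 : (2 * v) ^ 2 ≤ (v * ((e + 1 : ℕ) : ℝ)) ^ 2 := by
        apply pow_le_pow_left₀ (by positivity); nlinarith
      nlinarith [sq_nonneg (u - v), mul_nonneg p1 p2]
    · have h3 : c = 2 := by omega
      subst h3
      refine le_trans ?_ (Finset.sum_le_sum_of_subset_of_nonneg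
        (Finset.subset_univ {i, σ^[1] i}) (fun j _ _ => by positivity))
      rw [Finset.sum_pair (hne 1 (by omega) (by omega)), hdiag, hoff 1 (by omega) (by omega)]
      simp only [norm_mul, norm_pow, Complex.norm_natCast, Nat.choose_one_right]
      norm_num
      nlinarith

end GMF

namespace GMF

open Matrix

/-- orbit quotient -/
abbrev QQ {n : ℕ} (π : Equiv.Perm (Fin n)) : Type := Quotient (Equiv.Perm.SameCycle.setoid π)

noncomputable instance {n : ℕ} (π : Equiv.Perm (Fin n)) : Fintype (QQ π) :=
  Fintype.ofFinite _

noncomputable instance {n : ℕ} (π : Equiv.Perm (Fin n)) : DecidableEq (QQ π) :=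
  Classical.decEq _

/-- class map -/
def cl {n : ℕ} (π : Equiv.Perm (Fin n)) (i : Fin n) : QQ π :=
  Quotient.mk (Equiv.Perm.SameCycle.setoid π) i

theorem cl_eq {n : ℕ} (π : Equiv.Perm (Fin n)) (i j : Fin n) :
    cl π i = cl π j ↔ π.SameCycle i j := Quotient.eq

/-- size of a class -/
noncomputable def sz {n : ℕ} (π : Equiv.Perm (Fin n)) (q : QQ π) : ℕ :=
  (Finset.univ.filter fun i => cl π i = q).card

theorem minimalPeriod_eq {n : ℕ} (π : Equiv.Perm (Fin n)) (i : Fin n) :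
    Function.minimalPeriod π i = sz π (cl π i) := by
  classical
  have h := MulAction.minimalPeriod_eq_card (a := π) (b := i)
  have h2 : (fun x : Fin n => π • x) = π := rfl
  rw [h2] at h
  rw [h, sz, Fintype.card_subtype]
  congr 1
  ext j
  simp only [Finset.mem_filter, Finset.mem_univ, true_and, cl_eq, MulAction.mem_orbit_iff]
  constructor
  · rintro ⟨⟨g, k, rfl⟩, rfl⟩
    exact Equiv.Perm.SameCycle.symm ⟨k, rfl⟩
  · rintro h
    obtain ⟨k, hk⟩ := h.symm
    exact ⟨⟨π ^ k, k, rfl⟩, hk⟩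

theorem sz_pos {n : ℕ} (π : Equiv.Perm (Fin n)) (i : Fin n) : 1 ≤ sz π (cl π i) :=
  Finset.card_pos.2 ⟨i, by simp⟩

theorem sz_le {n : ℕ} (π : Equiv.Perm (Fin n)) (q : QQ π) : sz π q ≤ n := by
  simpa [sz] using Finset.card_le_univ (Finset.univ.filter fun i => cl π i = q)

theorem sz_one_iff {n : ℕ} (π : Equiv.Perm (Fin n)) (i : Fin n) :
    sz π (cl π i) = 1 ↔ π i = i := by
  rw [← minimalPeriod_eq, Function.minimalPeriod_eq_one_iff_isFixedPt]
  rfl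

/-- entries -/
noncomputable def ent {n : ℕ} (π : Equiv.Perm (Fin n)) (a b : ℂ) (i j : Fin n) : ℝ :=
  ‖(if i = j then a else 0) + (if i = π j then b else 0)‖

/-- factor -/
noncomputable def uu (a b : ℂ) (c : ℕ) (t : Bool) : ℝ :=
  if c = 1 then (if t then ‖a + b‖ else 0) else (if t then ‖a‖ ^ c else ‖b‖ ^ c)

theorem uu_nonneg (a b : ℂ) (c : ℕ) (t : Bool) : 0 ≤ uu a b c t := by
  unfold uu; split_ifs <;> positivity

theorem perm_bound {n : ℕ} (π : Equiv.Perm (Fin n)) (a b : ℂ) :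
    ∑ ρ : Equiv.Perm (Fin n), ∏ i, ent π a b i (ρ i) ≤ ∏ q : QQ π, UU a b (sz π q) := by
  classical
  have h1 : ∏ q : QQ π, UU a b (sz π q) =
      ∑ f : QQ π → Bool, ∏ q, uu a b (sz π q) (f q) := by
    have := Fintype.prod_sum (fun (q : QQ π) (t : Bool) => uu a b (sz π q) t)
    rw [← this]
    refine Finset.prod_congr rfl fun q _ => ?_
    unfold UU uu
    split_ifs <;> simp
  let adm : Finset (Equiv.Perm (Fin n)) :=
    Finset.univ.filter fun ρ => ∀ i, i = ρ i ∨ i = π (ρ i)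
  have hadm : ∀ ρ, ρ ∈ adm ↔ ∀ i, i = ρ i ∨ i = π (ρ i) := fun ρ => by simp [adm]
  let F : Equiv.Perm (Fin n) → QQ π → Bool := fun ρ q => decide (ρ q.out = q.out)
  -- fixed-ness is constant on cycles
  have hstep : ∀ ρ ∈ adm, ∀ i, ρ i = i → ρ (π i) = π i := by
    intro ρ hρ i hi
    rcases (hadm ρ).1 hρ (π i) with h | h
    · exact h.symm
    · have h2 : i = ρ (π i) := π.injective h
      have h3 : i = π i := ρ.injective (hi.trans h2)
      rw [← h3]; exact hi
  have hcyc : ∀ ρ ∈ adm, ∀ i j, π.SameCycle i j → ρ i = i → ρ j = j := by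
    intro ρ hρ i j hij hi
    obtain ⟨k, -, hk⟩ := hij.exists_pow_eq''
    obtain ⟨-, rfl⟩ := hk
    clear hij
    induction k with
    | zero => simpa using hi
    | succ k ih => rw [pow_succ', Equiv.Perm.mul_apply]; exact hstep ρ hρ _ ih
  have hF : ∀ ρ ∈ adm, ∀ i, F ρ (cl π i) = true ↔ ρ i = i := by
    intro ρ hρ i
    have hs : π.SameCycle (cl π i).out i := (cl_eq π _ _).1 (Quotient.out_eq (cl π i))
    simp only [F, decide_eq_true_eq]
    exact ⟨hcyc ρ hρ _ _ hs, hcyc ρ hρ _ _ hs.symm⟩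
  have hval : ∀ ρ ∈ adm, ∏ i, ent π a b i (ρ i) = ∏ q, uu a b (sz π q) (F ρ q) := by
    intro ρ hρ
    rw [← Finset.prod_fiberwise Finset.univ (cl π)]
    refine Finset.prod_congr rfl fun q _ => ?_
    obtain ⟨i0, hi0⟩ : ∃ i0, cl π i0 = q := ⟨q.out, Quotient.out_eq q⟩
    by_cases h1 : sz π q = 1
    · have hfix : π i0 = i0 := (sz_one_iff π i0).1 (by rw [hi0]; exact h1)
      have hρ0 : ρ i0 = i0 := by
        rcases (hadm ρ).1 hρ i0 with h | h
        · exact h.symm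
        · exact (π.injective (hfix.trans h)).symm
      have hFt : F ρ q = true := by rw [← hi0]; exact (hF ρ hρ i0).2 hρ0
      have hs : (Finset.univ.filter fun i => cl π i = q) = {i0} := by
        obtain ⟨x, hx⟩ := Finset.card_eq_one.1 h1
        have : i0 ∈ (Finset.univ.filter fun i => cl π i = q) := by simp [hi0]
        rw [hx] at this ⊢
        rw [Finset.mem_singleton.1 this]
      rw [hs, Finset.prod_singleton, hFt, ent, hρ0, hfix]
      simp [uu, h1]
    · have hconst : ∀ i ∈ (Finset.univ.filter fun i => cl π i = q),
          ent π a b i (ρ i) = if F ρ q = true then ‖a‖ else ‖b‖ := by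
        intro i hi
        have hi : cl π i = q := by simpa using hi
        have hπ : π i ≠ i := fun h => h1 (by rw [← hi]; exact (sz_one_iff π i).2 h)
        have hFi := hF ρ hρ i
        rw [hi] at hFi
        by_cases h : ρ i = i
        · rw [if_pos (hFi.2 h), ent, h, if_pos rfl, if_neg (Ne.symm hπ), add_zero]
        · rw [if_neg (fun h' => h (hFi.1 h')), ent, if_neg (Ne.symm h), zero_add, if_pos]
          exact ((hadm ρ).1 hρ i).resolve_left (Ne.symm h)
      rw [Finset.prod_congr rfl hconst, Finset.prod_const]
      change _ ^ sz π q = _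
      unfold uu
      rw [if_neg h1]
      split_ifs <;> rfl
  have hinj : Set.InjOn F adm := by
    intro ρ hρ ρ' hρ' h
    have hρ : ρ ∈ adm := hρ
    have hρ' : ρ' ∈ adm := hρ'
    ext i
    congr 1
    have e := congrFun h (cl π i)
    by_cases h1 : ρ i = i
    · have h2 : ρ' i = i := (hF ρ' hρ' i).1 (by rw [← e]; exact (hF ρ hρ i).2 h1)
      rw [h1, h2]
    · have h2 : ρ' i ≠ i := fun h2 => h1 ((hF ρ hρ i).1 (by rw [e]; exact (hF ρ' hρ' i).2 h2))
      have h3 := ((hadm ρ).1 hρ i).resolve_left (Ne.symm h1)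
      have h4 := ((hadm ρ').1 hρ' i).resolve_left (Ne.symm h2)
      exact π.injective (h3.symm.trans h4)
  have hzero : ∀ ρ ∈ Finset.univ, ρ ∉ adm → ∏ i, ent π a b i (ρ i) = 0 := by
    intro ρ _ hρ
    rw [hadm] at hρ
    push Not at hρ
    obtain ⟨i, h1, h2⟩ := hρ
    refine Finset.prod_eq_zero (Finset.mem_univ i) ?_
    simp [ent, h1, h2]
  rw [h1, ← Finset.sum_subset (Finset.subset_univ adm) hzero, Finset.sum_congr rfl hval,
    ← Finset.sum_image (f := fun f : QQ π → Bool => ∏ q, uu a b (sz π q) (f q)) hinj]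
  exact Finset.sum_le_sum_of_subset_of_nonneg (Finset.subset_univ _)
    (fun f _ _ => Finset.prod_nonneg fun q _ => uu_nonneg _ _ _ _)

theorem char_norm {n : ℕ} (G : Subgroup (Equiv.Perm (Fin n))) (χ : G →* ℂˣ) (σ : G) :
    ‖(χ σ : ℂ)‖ = 1 := by
  have h : (χ σ : ℂ) ^ orderOf σ = 1 := by
    rw [← Units.val_pow_eq_pow_val, ← map_pow, pow_orderOf_eq_one, map_one, Units.val_one]
  exact Complex.norm_eq_one_of_pow_eq_one h (orderOf_pos σ).ne'

theorem lhs_bound {n : ℕ} (G : Subgroup (Equiv.Perm (Fin n))) [Fintype G] (χ : G →* ℂˣ)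
    (θ τ : Equiv.Perm (Fin n)) (a b : ℂ) :
    ‖(∑ σ : G, (χ σ : ℂ) *
          ∏ i, (a • permMat θ + b • permMat τ) i ((σ : Equiv.Perm (Fin n)) i))‖ ≤
      ∏ q : QQ (θ⁻¹ * τ), UU a b (sz (θ⁻¹ * τ) q) := by
  classical
  set π := θ⁻¹ * τ with hπ
  have h1 : ∀ σ : Equiv.Perm (Fin n), ‖∏ i, (a • permMat θ + b • permMat τ) i (σ i)‖ =
      ∏ i, ent π a b i ((σ * θ) i) := by
    intro σ
    rw [norm_prod, ← Equiv.prod_comp θ]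
    refine Finset.prod_congr rfl fun i _ => ?_
    have e1 : (θ i = θ (σ (θ i))) ↔ i = (σ * θ) i := θ.injective.eq_iff
    have e2 : (θ i = τ (σ (θ i))) ↔ i = π ((σ * θ) i) := by
      rw [hπ, Equiv.Perm.mul_apply, Equiv.Perm.eq_inv_iff_eq, Equiv.Perm.mul_apply]
    simp only [ent, permMat, Matrix.add_apply, Matrix.smul_apply, Matrix.of_apply, smul_eq_mul,
      mul_ite, mul_one, mul_zero, e1, e2]
  have hnn : ∀ σ : Equiv.Perm (Fin n), 0 ≤ ∏ i, ent π a b i ((σ * θ) i) := fun σ =>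
    Finset.prod_nonneg fun i _ => norm_nonneg _
  calc _ ≤ ∑ σ : G, ∏ i, ent π a b i (((σ : Equiv.Perm (Fin n)) * θ) i) := by
        refine (norm_sum_le _ _).trans (Finset.sum_le_sum fun σ _ => ?_)
        rw [norm_mul, char_norm, one_mul, h1]
    _ ≤ ∑ σ : Equiv.Perm (Fin n), ∏ i, ent π a b i ((σ * θ) i) := by
        have hi : Function.Injective (fun σ : G => (σ : Equiv.Perm (Fin n))) :=
          Subtype.val_injective
        rw [← Finset.sum_image (g := fun σ : G => (σ : Equiv.Perm (Fin n)))
          (f := fun σ => ∏ i, ent π a b i ((σ * θ) i)) hi.injOn]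
        exact Finset.sum_le_sum_of_subset_of_nonneg (Finset.subset_univ _) fun σ _ _ => hnn σ
    _ = ∑ ρ : Equiv.Perm (Fin n), ∏ i, ent π a b i (ρ i) :=
        Equiv.sum_comp (Equiv.mulRight θ) (fun ρ => ∏ i, ent π a b i (ρ i))
    _ ≤ _ := perm_bound π a b

theorem amgm {n : ℕ} (hn : 1 ≤ n) (y : Fin n → ℝ) (hy : ∀ i, 0 ≤ y i) :
    ∏ i, y i ≤ (1 / (n : ℝ)) * ∑ i, y i ^ n := by
  have hn0 : (n : ℝ) ≠ 0 := by positivity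
  have h := Real.geom_mean_le_arith_mean_weighted Finset.univ (fun _ : Fin n => (1 / (n : ℝ)))
    (fun i => y i ^ n) (fun _ _ => by positivity) (by simp [hn0])
    (fun i _ => pow_nonneg (hy i) n)
  rw [← Finset.mul_sum] at h
  refine le_trans (le_of_eq ?_) h
  refine Finset.prod_congr rfl fun i _ => ?_
  rw [one_div, Real.pow_rpow_inv_natCast (hy i) (by omega)]

theorem rhs_bound {n : ℕ} (hn : 1 ≤ n) (π : Equiv.Perm (Fin n)) (a b : ℂ) (lam : Fin n → ℂ)
    (hlam : ((starRingEnd ℂ a * b) • permMat π).charpoly = ∏ j, (X - C (lam j))) :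
    (∏ q : QQ π, UU a b (sz π q)) ^ 2 ≤
      (1 / (n : ℝ)) * ∑ j, (‖a‖ ^ 2 + ‖b‖ ^ 2 + 2 * (lam j).re) ^ n := by
  have htr := trace_HH π a b lam hlam n
  set y : Fin n → ℝ := fun i =>
    (UU a b (sz π (cl π i)) ^ 2) ^ ((sz π (cl π i) : ℝ)⁻¹) with hy
  have hy0 : ∀ i, 0 ≤ y i := fun i => Real.rpow_nonneg (sq_nonneg _) _
  have hprod : (∏ q : QQ π, UU a b (sz π q)) ^ 2 = ∏ i, y i := by
    rw [← Finset.prod_pow, ← Finset.prod_fiberwise Finset.univ (cl π) y]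
    refine Finset.prod_congr rfl fun q _ => ?_
    obtain ⟨i0, hi0⟩ : ∃ i0, cl π i0 = q := ⟨q.out, Quotient.out_eq q⟩
    have hs : sz π q ≠ 0 := by
      have := sz_pos π i0
      rw [hi0] at this
      omega
    rw [Finset.prod_congr rfl (g := fun _ => (UU a b (sz π q) ^ 2) ^ ((sz π q : ℝ)⁻¹)),
      Finset.prod_const]
    · change _ = _ ^ sz π q
      rw [Real.rpow_inv_natCast_pow (sq_nonneg _) hs]
    · intro i hi
      have hi : cl π i = q := by simpa using hi
      simp only [hy, hi]
  have hle : ∀ i, y i ^ n ≤ ∑ j, ‖(BB π a b ^ n) j i‖ ^ 2 := by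
    intro i
    obtain ⟨w, d, hw, hw1, hd, hk⟩ := moments (BB π a b) i
    have hk' : ∀ k : ℕ, ∑ j, ‖(BB π a b ^ k) j i‖ ^ 2 = ∑ j, w j * d j ^ k := by
      intro k
      have := hk k
      rw [HH_pow_diag] at this
      exact_mod_cast this
    rw [hk']
    refine power_mean w d hw hw1 hd _ n (sz_pos π i) (sz_le π _) _ (sq_nonneg _) ?_
    rw [← hk']
    exact lower π a b i _ (minimalPeriod_eq π i) (sz_pos π i)
  have hsum : ∑ i, ∑ j, ‖(BB π a b ^ n) j i‖ ^ 2 =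
      ∑ j, (‖a‖ ^ 2 + ‖b‖ ^ 2 + 2 * (lam j).re) ^ n := by
    rw [Matrix.trace] at htr
    simp only [Matrix.diag_apply, HH_pow_diag] at htr
    exact_mod_cast htr
  rw [hprod, ← hsum]
  refine (amgm hn y hy0).trans ?_
  exact mul_le_mul_of_nonneg_left (Finset.sum_le_sum fun i _ => hle i) (by positivity)

end GMF

/-- For a linear character `χ` of a subgroup `G` of `S_n`, and
`λ₁,…,λ_n` the roots (with multiplicity) of the characteristic polynomial of
`(conj a · b)·P_{θ⁻¹τ}`, we have
`|d_χ^G(aP_θ + bP_τ)|² ≤ (1/n)·Σ_j (|a|² + |b|² + 2 Re(λ_j))^n`. -/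
theorem genMatrixFn_stmt13 (n : ℕ) (hn : 1 ≤ n)
    (G : Subgroup (Equiv.Perm (Fin n))) [Fintype G] (χ : G →* ℂˣ)
    (θ τ : Equiv.Perm (Fin n)) (a b : ℂ) (lam : Fin n → ℂ)
    (hlam : ((starRingEnd ℂ a * b) • permMat (θ⁻¹ * τ)).charpoly =
      ∏ j, (X - C (lam j))) :
    ‖
        (∑ σ : G, (χ σ : ℂ) *
          ∏ i, (a • permMat θ + b • permMat τ) i ((σ : Equiv.Perm (Fin n)) i))‖ ^ 2 ≤
      (1 / (n : ℝ)) *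
        ∑ j, (‖a‖ ^ 2 + ‖b‖ ^ 2 + 2 * (lam j).re) ^ n := by
  refine le_trans ?_ (GMF.rhs_bound hn (θ⁻¹ * τ) a b lam hlam)
  exact pow_le_pow_left₀ (norm_nonneg _) (GMF.lhs_bound G χ θ τ a b) 2
end

section
/- Let m, n ≥ 1, let θ, τ be permutations of {1,…,n}, let θ₁,…,θ_n, τ₁,…,τ_n be permutations of {1,…,m}, and let a₁,…,a_n, b₁,…,b_n ∈ ℂ. Let M be the complex matrix indexed by pairs in {1,…,n}×{1,…,m} with M_{(i,p),(j,q)} = a_i·[j = θ(i)]·[p = θ_i(q)] + b_i·[j = τ(i)]·[p = τ_i(q)] (where [·] is 1 if the condition holds and 0 otherwise). Let α and β be the permutations of {1,…,n}×{1,…,m} defined by α(θ(i), q) = (i, θ_i(q)) and β(τ(i), q) = (i, τ_i(q)) for all i, q. Then for every subgroup G of the group of permutations of {1,…,n}×{1,…,m} and every function χ : G → ℂ, d_χ^G(M) = Σ_{σ ∈ X(α,β) ∩ G} χ(σ⁻¹) · ∏_{y : α(y) = β(y)} (a_{c(y)} + b_{c(y)}) · ∏_{y : σ(y) = α(y) ≠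 β(y)} a_{c(y)} · ∏_{y : σ(y) = β(y) ≠ α(y)} b_{d(y)}, where c(y) denotes the first coordinate of α(y) and d(y) denotes the first coordinate of β(y). -/
open Finset

/-- Generalized matrix function of the block matrix `M` built from
permutations `θ, τ` of `[n]`, permutations `θᵢ, τᵢ` of `[m]` and scalars `aᵢ, bᵢ`:
for every subgroup `G` of the permutations of `[n]×[m]` and every `χ : G → ℂ`,
`d_χ^G(M) = Σ_{σ ∈ X(α,β) ∩ G} χ(σ⁻¹) ∏_{α(y)=β(y)} (a_{c(y)} + b_{c(y)})
 ∏_{σ(y)=α(y)≠β(y)} a_{c(y)} ∏_{σ(y)=β(y)≠α(y)} b_{d(y)}`,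
where `c(y) = (α(y)).1` and `d(y) = (β(y)).1`. -/
theorem genMatrixFn_stmt14 (m n : ℕ) (hm : 1 ≤ m) (hn : 1 ≤ n)
    (θ τ : Equiv.Perm (Fin n)) (θb τb : Fin n → Equiv.Perm (Fin m))
    (a b : Fin n → ℂ)
    (M : Matrix (Fin n × Fin m) (Fin n × Fin m) ℂ)
    (hM : ∀ i p j q, M (i, p) (j, q) =
      a i * (if j = θ i then 1 else 0) * (if p = θb i q then 1 else 0) +
        b i * (if j = τ i then 1 else 0) * (if p = τb i q then 1 else 0))
    (α β : Equiv.Perm (Fin n × Fin m))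
    (hα : ∀ i q, α (θ i, q) = (i, θb i q))
    (hβ : ∀ i q, β (τ i, q) = (i, τb i q))
    (G : Subgroup (Equiv.Perm (Fin n × Fin m))) [Fintype G] (χ : G → ℂ) :
    ∑ σ : G, χ σ * ∏ y, M y ((σ : Equiv.Perm (Fin n × Fin m)) y) =
      ∑ σ ∈ Finset.univ.filter
          (fun σ : G => ∀ y, (σ : Equiv.Perm (Fin n × Fin m)) y = α y ∨
            (σ : Equiv.Perm (Fin n × Fin m)) y = β y),
        χ σ⁻¹ *
          (∏ y ∈ Finset.univ.filter (fun y => α y = β y), (a (α y).1 + b (α y).1)) *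
          (∏ y ∈ Finset.univ.filter
              (fun y => (σ : Equiv.Perm (Fin n × Fin m)) y = α y ∧ α y ≠ β y),
            a (α y).1) *
          (∏ y ∈ Finset.univ.filter
              (fun y => (σ : Equiv.Perm (Fin n × Fin m)) y = β y ∧ β y ≠ α y),
            b (β y).1) := by
  have hA : ∀ x y : Fin n × Fin m, M x y =
      (if x = α y then a x.1 else 0) + (if x = β y then b x.1 else 0) := by
    rintro ⟨i, p⟩ ⟨j, q⟩
    rw [hM]
    congr 1
    · obtain ⟨k, rfl⟩ := θ.surjective j
      rw [hα]
      by_cases h : k = i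
      · subst h
        simp
      · simp [h, Ne.symm h]
    · obtain ⟨k, rfl⟩ := τ.surjective j
      rw [hβ]
      by_cases h : k = i
      · subst h
        simp
      · simp [h, Ne.symm h]
  rw [← Equiv.sum_comp (Equiv.inv G), Finset.sum_filter]
  refine Finset.sum_congr rfl fun σ _ => ?_
  have h1 : ∏ y, M y ((((Equiv.inv G) σ : G) : Equiv.Perm (Fin n × Fin m)) y) =
      ∏ y, M ((σ : Equiv.Perm (Fin n × Fin m)) y) y := by
    rw [← Equiv.prod_comp (σ : Equiv.Perm (Fin n × Fin m))]
    simp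
  rw [h1, Equiv.inv_apply]
  split_ifs with h
  · rw [mul_assoc, mul_assoc]
    congr 1
    rw [Finset.prod_filter, Finset.prod_filter, Finset.prod_filter,
      ← Finset.prod_mul_distrib, ← Finset.prod_mul_distrib]
    refine Finset.prod_congr rfl fun y _ => ?_
    rw [hA]
    by_cases e : α y = β y
    · have : (σ : Equiv.Perm (Fin n × Fin m)) y = β y := by
        rcases h y with h | h
        · rw [h, e]
        · exact h
      simp [this, e]
    · rcases h y with h | h
      · simp [h, e]
      · simp [h, e, Ne.symm e]
  · push Not at h
    obtain ⟨y, hy1, hy2⟩ := h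
    rw [Finset.prod_eq_zero (Finset.mem_univ y), mul_zero]
    rw [hA]
    simp [hy1, hy2]
end

section
/- Let n ≥ 1, let θ be a permutation of {1,…,n}, let F be the number of fixed points of θ, and let t be the number of 2-cycles (transpositions) in the disjoint cycle decomposition of θ. Then for every subgroup G of S_n and every function χ : G → ℂ, d_χ^G(P_θ + P_{θ⁻¹}) = 2^{F + 2t} · d_χ^G(S_θ). -/
open Finset

/-- The symmetric matrix `S_θ`: `(S_θ)_{i,j} = 1` if `θ(i) = j` or `θ⁻¹(i) = j`, else `0`. -/
noncomputable def symMat {n : ℕ} (θ : Equiv.Perm (Fin n)) : Matrix (Fin n) (Fin n) ℂ :=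
  Matrix.of fun i j => if θ i = j ∨ θ⁻¹ i = j then 1 else 0

theorem card_invol_aux {n : ℕ} (θ : Equiv.Perm (Fin n)) :
    (Finset.univ.filter fun i => θ (θ i) = i).card =
      (Finset.univ.filter fun i => θ i = i).card +
      2 * (θ.cycleFactorsFinset.filter fun c => c.support.card = 2).card := by
  have h1 : (Finset.univ.filter fun i => θ (θ i) = i) =
      (Finset.univ.filter fun i => θ i = i) ∪
      (θ.cycleFactorsFinset.filter fun c => c.support.card = 2).biUnion
        (fun c => c.support) := by
    ext i
    simp only [Finset.mem_filter, Finset.mem_univ, true_and, Finset.mem_union,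
      Finset.mem_biUnion]
    constructor
    · intro h
      by_cases hi : θ i = i
      · exact Or.inl hi
      right
      have hc : (θ.cycleOf i).IsCycle := Equiv.Perm.isCycle_cycleOf θ hi
      refine ⟨θ.cycleOf i, ⟨Equiv.Perm.cycleOf_mem_cycleFactorsFinset_iff.2
        (Equiv.Perm.mem_support.2 hi), ?_⟩, ?_⟩
      · rw [← hc.orderOf]
        apply orderOf_eq_prime
        · rw [hc.pow_eq_one_iff]
          refine ⟨i, by simpa using hi, ?_⟩
          rw [Equiv.Perm.cycleOf_pow_apply_self]
          simpa [pow_two] using h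
        · exact hc.ne_one
      · simpa using hi
    · rintro (h | ⟨c, ⟨hc, h2⟩, hi⟩)
      · rw [h, h]
      · obtain ⟨hcyc, hθ⟩ := Equiv.Perm.mem_cycleFactorsFinset_iff.1 hc
        have h3 : c ^ 2 = 1 := by
          rw [← h2, ← hcyc.orderOf]; exact pow_orderOf_eq_one c
        rw [← hθ i hi, ← hθ (c i) (Equiv.Perm.apply_mem_support.2 hi)]
        have := congrArg (fun f : Equiv.Perm (Fin n) => f i) h3
        simpa [pow_two] using this
  rw [h1, Finset.card_union_of_disjoint, Finset.card_biUnion]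
  · congr 1
    rw [Finset.sum_congr rfl (g := fun _ => 2)]
    · simp [mul_comm]
    · intro c hc
      exact (Finset.mem_filter.1 hc).2
  · intro c hc d hd hcd
    exact (Equiv.Perm.cycleFactorsFinset_pairwise_disjoint θ (Finset.mem_filter.1 hc).1
      (Finset.mem_filter.1 hd).1 hcd).disjoint_support
  · rw [Finset.disjoint_left]
    intro i hi hj
    obtain ⟨c, hc, hic⟩ := Finset.mem_biUnion.1 hj
    have := Equiv.Perm.mem_cycleFactorsFinset_support_le (Finset.mem_filter.1 hc).1 hic
    exact Equiv.Perm.mem_support.1 this (Finset.mem_filter.1 hi).2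

theorem entry_aux {n : ℕ} (θ : Equiv.Perm (Fin n)) (i j : Fin n) :
    (permMat θ + permMat θ⁻¹) i j = (if θ (θ i) = i then 2 else 1) * symMat θ i j := by
  have e1 : (i = θ⁻¹ j) ↔ θ i = j := by rw [Equiv.Perm.eq_inv_iff_eq]
  have e2 : (θ⁻¹ i = j) ↔ i = θ j := by rw [Equiv.Perm.inv_eq_iff_eq]
  simp only [permMat, symMat, Matrix.add_apply, Matrix.of_apply, e1, e2]
  by_cases ha : θ i = j
  · subst ha
    by_cases hb : i = θ (θ i)
    · rw [if_pos hb, if_pos hb.symm]; norm_num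
    · rw [if_neg hb, if_neg (Ne.symm hb)]; norm_num
  · by_cases hb : i = θ j
    · have : θ (θ i) ≠ i := by
        intro h
        exact ha (θ.injective (h.trans hb))
      rw [if_neg this, if_pos hb, if_neg ha, if_pos (Or.inr hb)]; norm_num
    · simp [ha, hb]

/-- With `F` the number of fixed points of `θ` and `t` the number of
transpositions in the disjoint cycle decomposition of `θ`,
`d_χ^G(P_θ + P_{θ⁻¹}) = 2^{F + 2t} · d_χ^G(S_θ)` for every subgroup `G` of `S_n` and
every function `χ : G → ℂ`. -/
theorem genMatrixFn_stmt15 (n : ℕ) (hn : 1 ≤ n) (θ : Equiv.Perm (Fin n)) (F t : ℕ)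
    (hF : F = (Finset.univ.filter fun i => θ i = i).card)
    (ht : t = (θ.cycleFactorsFinset.filter fun c => c.support.card = 2).card)
    (G : Subgroup (Equiv.Perm (Fin n))) [Fintype G] (χ : G → ℂ) :
    ∑ σ : G, χ σ * ∏ i, (permMat θ + permMat θ⁻¹) i ((σ : Equiv.Perm (Fin n)) i) =
      2 ^ (F + 2 * t) *
        ∑ σ : G, χ σ * ∏ i, symMat θ i ((σ : Equiv.Perm (Fin n)) i) := by
  have hc : F + 2 * t = (Finset.univ.filter fun i => θ (θ i) = i).card := by
    rw [hF, ht, card_invol_aux]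
  rw [hc, Finset.mul_sum]
  refine Finset.sum_congr rfl fun σ _ => ?_
  simp only [entry_aux]
  rw [Finset.prod_mul_distrib, Finset.prod_ite]
  simp only [Finset.prod_const, one_pow, mul_one]
  ring
end

section
/- Let n ≥ 1 and let θ, τ be disjoint permutations of {1,…,n} (i.e., for every i ∈ {1,…,n}, θ(i) = i or τ(i) = i). Then S_θ · S_τ = S_{θτ}. -/
/-- If `θ` and `τ` are disjoint permutations of `{1,…,n}`
(i.e., for every `i`, `θ(i) = i` or `τ(i) = i`), then `S_θ · S_τ = S_{θτ}`. -/
theorem genMatrixFn_stmt16 (n : ℕ) (hn : 1 ≤ n) (θ τ : Equiv.Perm (Fin n))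
    (hdisj : ∀ i, θ i = i ∨ τ i = i) :
    symMat θ * symMat τ = symMat (θ * τ) := by
  have fixinv : ∀ (σ : Equiv.Perm (Fin n)) (a : Fin n), σ a = a → σ⁻¹ a = a := by
    intro σ a h
    rw [Equiv.Perm.inv_eq_iff_eq]; exact h.symm
  have key : ∀ i, θ i = i → θ (τ i) = τ i ∧ θ (τ⁻¹ i) = τ⁻¹ i := by
    intro i hi
    constructor
    · rcases hdisj (τ i) with h | h
      · exact h
      · have := τ.injective h
        rw [this, hi]
    · rcases hdisj (τ⁻¹ i) with h | h
      · exact h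
      · have h2 : i = τ⁻¹ i := by simpa using h
        rw [← h2, hi]
  have key2 : ∀ i, θ i ≠ i → τ (θ i) = θ i ∧ τ (θ⁻¹ i) = θ⁻¹ i := by
    intro i hi
    constructor
    · rcases hdisj (θ i) with h | h
      · exact absurd (θ.injective h) hi
      · exact h
    · rcases hdisj (θ⁻¹ i) with h | h
      · have h2 : i = θ⁻¹ i := by simpa using h
        exact absurd (by rw [← h2] at h; exact h) hi
      · exact h
  have comm : θ * τ = τ * θ := by
    have : Equiv.Perm.Disjoint θ τ := hdisj
    exact this.commute
  ext i j
  have hinv : (θ * τ)⁻¹ i = θ⁻¹ (τ⁻¹ i) := by rw [comm, mul_inv_rev]; rfl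
  have hinv' : (θ * τ)⁻¹ i = τ⁻¹ (θ⁻¹ i) := by rw [mul_inv_rev]; rfl
  rw [Matrix.mul_apply]
  simp only [symMat, Matrix.of_apply]
  by_cases hi : θ i = i
  · obtain ⟨h1, h2⟩ := key i hi
    rw [Finset.sum_eq_single i]
    · rw [hinv, fixinv θ _ h2, Equiv.Perm.mul_apply, h1, hi]
      simp
    · intro b _ hb
      rw [hi, fixinv θ _ hi]
      simp [hb.symm]
    · simp
  · obtain ⟨h1, h2⟩ := key2 i hi
    have hτi : τ i = i := (hdisj i).resolve_left hi
    have e1 : (θ * τ) i = θ i := by rw [Equiv.Perm.mul_apply, hτi]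
    have e2 : (θ * τ)⁻¹ i = θ⁻¹ i := by rw [hinv', fixinv τ _ h2]
    rw [e1, e2, Finset.sum_eq_single j]
    · by_cases hj : θ i = j ∨ θ⁻¹ i = j
      · have : τ j = j := by
          rcases hj with rfl | rfl
          · exact h1
          · exact h2
        simp [hj, this]
      · rw [if_neg hj, zero_mul]
    · intro b _ hb
      by_cases hj : θ i = b ∨ θ⁻¹ i = b
      · have : τ b = b := by
          rcases hj with rfl | rfl
          · exact h1
          · exact h2
        rw [this, fixinv τ _ this]
        simp [hb]
      · rw [if_neg hj, zero_mul]
    · simp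
end

section
/- Let n ≥ 1 and let π be a permutation of {1,…,n} that is a cycle of length ℓ ≥ 2 (so the order of π is ℓ). Then det(S_π) = −1 if ℓ = 2; det(S_π) = 2 if ℓ is odd; det(S_π) = −4 if ℓ > 2 and ℓ ≡ 2 (mod 4); and det(S_π) = 0 if ℓ ≡ 0 (mod 4). -/
noncomputable def auxM {n : ℕ} (π : Equiv.Perm (Fin n)) (x : ℂ) : Matrix (Fin n) (Fin n) ℂ :=
  Matrix.of fun i j => if π i = i then (if i = j then 1 else 0)
    else x * (if i = j then 1 else 0) - (if π i = j then 1 else 0)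

lemma auxM_perm {n : ℕ} (π : Equiv.Perm (Fin n)) (hc : π.IsCycle) (σ : Equiv.Perm (Fin n))
    (h : ∀ i, σ i = i ∨ σ i = π i) : σ = 1 ∨ σ = π := by
  by_cases h1 : σ = 1
  · exact Or.inl h1
  right
  obtain ⟨i, hi⟩ : ∃ i, σ i ≠ i := by
    by_contra hh
    push Not at hh
    exact h1 (Equiv.ext hh)
  have hi' : σ i = π i := (h i).resolve_left hi
  have hpi : π i ≠ i := hi' ▸ hi
  have hk : ∀ k : ℕ, σ ((π ^ k) i) = π ((π ^ k) i) := by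
    intro k
    induction k with
    | zero => simpa using hi'
    | succ k ih =>
      rcases h ((π ^ (k+1)) i) with h2 | h2
      · exfalso
        rw [pow_succ', Equiv.Perm.mul_apply] at h2
        have h3 := σ.injective (h2.trans ih.symm)
        have : π ((π ^ k) i) = (π ^ k) (π i) := by
          rw [← Equiv.Perm.mul_apply, ← Equiv.Perm.mul_apply, ← pow_succ', ← pow_succ]
        rw [this] at h3
        exact hpi ((π ^ k).injective h3)
      · exact h2
  ext1 j
  by_cases hj : π j = j
  · rcases h j with h2 | h2
    · rw [h2, hj]
    · exact h2
  · obtain ⟨k, rfl⟩ := hc.exists_pow_eq hpi hj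
    exact hk k

lemma auxM_det {n : ℕ} (π : Equiv.Perm (Fin n)) (hc : π.IsCycle) (x : ℂ) :
    (auxM π x).det = x ^ π.support.card - 1 := by
  classical
  have hne : (1 : Equiv.Perm (Fin n)) ≠ π := hc.ne_one.symm
  rw [← Matrix.det_transpose, Matrix.det_apply']
  rw [← Finset.sum_subset (Finset.subset_univ {1, π}), Finset.sum_pair hne]
  · have e1 : ∏ i, (auxM π x).transpose ((1 : Equiv.Perm (Fin n)) i) i = x ^ π.support.card := by
      rw [← Finset.prod_const, ← Finset.prod_subset (Finset.subset_univ π.support)]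
      · refine Finset.prod_congr rfl fun i hi => ?_
        rw [Equiv.Perm.mem_support] at hi
        simp [auxM, hi]
      · intro i _ hi
        rw [Equiv.Perm.notMem_support] at hi
        simp [auxM, hi]
    have e2 : ∏ i, (auxM π x).transpose (π i) i = (-1) ^ π.support.card := by
      rw [← Finset.prod_const, ← Finset.prod_subset (Finset.subset_univ π.support)]
      · refine Finset.prod_congr rfl fun i hi => ?_
        rw [Equiv.Perm.mem_support] at hi
        simp [auxM, hi, hi.symm]
      · intro i _ hi
        rw [Equiv.Perm.notMem_support] at hi
        simp [auxM, hi]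
    rw [e1, e2, hc.sign]
    have : ((-1 : ℂ) ^ π.support.card) * (-1) ^ π.support.card = 1 := by
      rw [← mul_pow]; simp
    simp [this]
    ring
  · intro σ _ hσ
    simp only [Finset.mem_insert, Finset.mem_singleton] at hσ
    by_contra hh
    apply hσ
    apply auxM_perm π hc
    intro i
    have h2 := Finset.prod_ne_zero_iff.1 (right_ne_zero_of_mul hh) i (Finset.mem_univ i)
    by_contra h3
    push Not at h3
    apply h2
    simp [auxM, h3.1.symm, h3.2.symm]

lemma auxM_mul {n : ℕ} (π : Equiv.Perm (Fin n)) (hc : π.IsCycle) (hl : 2 < π.support.card) :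
    auxM π Complex.I * auxM π (-Complex.I) =
      (symMat π).submatrix id (π⁻¹ : Equiv.Perm (Fin n)) := by
  ext i j
  rw [Matrix.mul_apply]
  by_cases hi : π i = i
  · have hi' : π⁻¹ i = i := by rw [Equiv.Perm.inv_eq_iff_eq, hi]
    have h2 : i = π⁻¹ j ↔ i = j := by rw [Equiv.Perm.eq_inv_iff_eq, hi]
    have : ∀ k, auxM π Complex.I i k = (if i = k then 1 else 0) := by intro k; simp [auxM, hi]
    simp only [this, ite_mul, zero_mul, one_mul, Finset.sum_ite_eq, Finset.mem_univ, if_true]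
    simp only [auxM, symMat, Matrix.of_apply, Matrix.submatrix_apply, id, hi, hi', h2, if_true,
      or_self]
  · have hii : π (π i) ≠ π i := fun h => hi (π.injective h)
    have h2 : π (π i) ≠ i := by
      intro h
      have h3 : π ^ 2 = 1 := hc.pow_eq_one_iff.2 ⟨i, hi, by simpa [pow_two] using h⟩
      have := Nat.le_of_dvd (by norm_num) (orderOf_dvd_of_pow_eq_one h3)
      rw [hc.orderOf] at this
      omega
    have e1 : π i = π⁻¹ j ↔ π (π i) = j := by rw [Equiv.Perm.eq_inv_iff_eq]
    have e2 : π⁻¹ i = π⁻¹ j ↔ i = j := by simp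
    have : ∀ k, auxM π Complex.I i k = Complex.I * (if i = k then 1 else 0)
      - (if π i = k then 1 else 0) := by intro k; simp [auxM, hi]
    simp only [this, sub_mul, Finset.sum_sub_distrib, mul_ite, ite_mul, mul_one, mul_zero, zero_mul,
      one_mul, Finset.sum_ite_eq, Finset.mem_univ, if_true]
    simp only [auxM, symMat, Matrix.of_apply, Matrix.submatrix_apply, id, e1, e2, hi, hii, if_false]
    by_cases a : i = j
    · subst a
      simp [hi, h2]
    · by_cases b : π (π i) = j
      · by_cases c : π i = j <;> simp [a, b, c]
      · by_cases c : π i = j <;> simp [a, b, c]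

lemma symMat_det {n : ℕ} (π : Equiv.Perm (Fin n)) (hc : π.IsCycle) (hl : 2 < π.support.card) :
    (symMat π).det = -(-1) ^ π.support.card *
      ((Complex.I ^ π.support.card - 1) * ((-Complex.I) ^ π.support.card - 1)) := by
  have h := congrArg Matrix.det (auxM_mul π hc hl)
  rw [Matrix.det_mul, auxM_det π hc, auxM_det π hc, Matrix.det_permute', Equiv.Perm.sign_inv,
    hc.sign] at h
  rw [h, ← mul_assoc]
  have : ((-1 : ℂ) ^ π.support.card) * (-1) ^ π.support.card = 1 := by
    rw [← mul_pow]; simp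
  simp [this]

/-- If `π` is a cycle of length `ℓ ≥ 2`, then `det(S_π)` is `−1` if
`ℓ = 2`, `2` if `ℓ` is odd, `−4` if `ℓ > 2` and `ℓ ≡ 2 (mod 4)`, and `0` if
`ℓ ≡ 0 (mod 4)`. -/
theorem genMatrixFn_stmt17 (n ℓ : ℕ) (hn : 1 ≤ n) (π : Equiv.Perm (Fin n))
    (hcyc : π.IsCycle) (hlen : π.support.card = ℓ) (hl2 : 2 ≤ ℓ) :
    (ℓ = 2 → (symMat π).det = -1) ∧
      (Odd ℓ → (symMat π).det = 2) ∧
      (2 < ℓ ∧ ℓ % 4 = 2 → (symMat π).det = -4) ∧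
      (ℓ % 4 = 0 → (symMat π).det = 0) := by
  have key : ∀ q r, ℓ = 4 * q + r → 2 < ℓ → (symMat π).det = -(-1) ^ r *
      ((Complex.I ^ r - 1) * ((-Complex.I) ^ r - 1)) := by
    intro q r h h2
    rw [symMat_det π hcyc (by omega), hlen, h]
    have h1 : (-1 : ℂ) ^ 4 = 1 := by norm_num
    have h3 : (-Complex.I) ^ 4 = 1 := by rw [neg_pow, h1, Complex.I_pow_four, one_mul]
    simp only [pow_add, pow_mul, h1, h3, Complex.I_pow_four, one_pow, one_mul]
  have hI := Complex.I_sq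
  refine ⟨fun h => ?_, fun h => ?_, fun h => ?_, fun h => ?_⟩
  · have h2 : π ^ 2 = 1 := by
      rw [← h, ← hlen, ← hcyc.orderOf, pow_orderOf_eq_one]
    have h3 : π⁻¹ = π := by
      rw [inv_eq_iff_mul_eq_one, ← pow_two, h2]
    have h4 : symMat π = (1 : Matrix (Fin n) (Fin n) ℂ).submatrix π id := by
      ext i j
      simp [symMat, h3, Matrix.one_apply]
    rw [h4, Matrix.det_permute, hcyc.sign, hlen, h]
    simp
  · have h5 := Nat.odd_iff.1 h
    obtain h6 | h6 : ℓ % 4 = 1 ∨ ℓ % 4 = 3 := by omega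
    · rw [key (ℓ / 4) 1 (by omega) (by omega)]
      linear_combination -hI
    · rw [key (ℓ / 4) 3 (by omega) (by omega)]
      linear_combination (-Complex.I ^ 4 + Complex.I ^ 2 - 1) * hI
  · rw [key (ℓ / 4) 2 (by omega) (by omega)]
    linear_combination (-Complex.I ^ 2 + 3) * hI
  · rw [key (ℓ / 4) 0 (by omega) (by omega)]
    simp
end

section
/- Let n ≥ 1 and let θ be a permutation of {1,…,n}. Then the disjoint cycle decomposition of θ contains a cycle whose length is divisible by 4 if and only if det(S_θ) = 0. -/
lemma symMat_mulVec_aux {n : ℕ} (θ : Equiv.Perm (Fin n)) (v : Fin n → ℂ) (i : Fin n) :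
    ((symMat θ).mulVec v) i = if θ i = θ⁻¹ i then v (θ i) else v (θ i) + v (θ⁻¹ i) := by
  have h : ∀ j, symMat θ i j * v j
      = (if θ i = j then v j else 0) + (if θ⁻¹ i = j then (if θ i = θ⁻¹ i then 0 else v j) else 0) := by
    intro j
    simp only [symMat, Matrix.of_apply]
    by_cases h1 : θ i = j <;> by_cases h2 : θ⁻¹ i = j <;> simp_all
  simp only [Matrix.mulVec, dotProduct]
  rw [Finset.sum_congr rfl (fun j _ => h j), Finset.sum_add_distrib,
    Finset.sum_ite_eq, Finset.sum_ite_eq]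
  split_ifs <;> simp_all

/-- The disjoint cycle decomposition of `θ` contains a cycle whose
length is divisible by 4 if and only if `det(S_θ) = 0`. -/
theorem genMatrixFn_stmt18 (n : ℕ) (hn : 1 ≤ n) (θ : Equiv.Perm (Fin n)) :
    (∃ c ∈ θ.cycleFactorsFinset, 4 ∣ c.support.card) ↔ (symMat θ).det = 0 := by
  rw [← Matrix.exists_mulVec_eq_zero_iff]
  constructor
  · rintro ⟨c, hc, h4⟩
    obtain ⟨x, hx⟩ := (Equiv.Perm.mem_cycleFactorsFinset_iff.1 hc).1.nonempty_support
    have hcx : c = θ.cycleOf x := Equiv.Perm.cycle_is_cycleOf hx hc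
    have hxs : θ x ≠ x := Equiv.Perm.mem_support.1
      (Equiv.Perm.mem_cycleFactorsFinset_support_le hc hx)
    have hon := Equiv.Perm.isCycleOn_support_cycleOf θ x
    rw [← hcx] at hon
    classical
    let v : Fin n → ℂ := fun y => (if ∃ k : ℤ, (θ ^ (4 * k)) x = y then 1 else 0)
      - (if ∃ k : ℤ, (θ ^ (4 * k + 2)) x = y then 1 else 0)
    have key : ∀ i, v (θ i) = - v (θ⁻¹ i) := by
      intro i
      have e1 : (∃ k : ℤ, (θ ^ (4 * k)) x = θ i) ↔ (∃ k : ℤ, (θ ^ (4 * k + 2)) x = θ⁻¹ i) := by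
        constructor
        · rintro ⟨k, hk⟩
          refine ⟨k - 1, ?_⟩
          rw [show 4 * (k - 1) + 2 = -1 + (-1 + 4 * k) by ring, zpow_add, zpow_add,
            Equiv.Perm.mul_apply, Equiv.Perm.mul_apply, hk]
          simp
        · rintro ⟨k, hk⟩
          refine ⟨k + 1, ?_⟩
          rw [show 4 * (k + 1) = 1 + (1 + (4 * k + 2)) by ring, zpow_add, zpow_add,
            Equiv.Perm.mul_apply, Equiv.Perm.mul_apply, hk]
          simp
      have e2 : (∃ k : ℤ, (θ ^ (4 * k + 2)) x = θ i) ↔ (∃ k : ℤ, (θ ^ (4 * k)) x = θ⁻¹ i) := by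
        constructor
        · rintro ⟨k, hk⟩
          refine ⟨k, ?_⟩
          rw [show 4 * k = -1 + (-1 + (4 * k + 2)) by ring, zpow_add, zpow_add,
            Equiv.Perm.mul_apply, Equiv.Perm.mul_apply, hk]
          simp
        · rintro ⟨k, hk⟩
          refine ⟨k, ?_⟩
          rw [show 4 * k + 2 = 1 + (1 + (4 * k)) by ring, zpow_add, zpow_add,
            Equiv.Perm.mul_apply, Equiv.Perm.mul_apply, hk]
          simp
      simp only [v, e1, e2]
      ring
    refine ⟨v, ?_, ?_⟩
    · intro h0
      have hv := congrFun h0 x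
      have h1 : ∃ k : ℤ, (θ ^ (4 * k)) x = x := ⟨0, by simp⟩
      have h2 : ¬ ∃ k : ℤ, (θ ^ (4 * k + 2)) x = x := by
        rintro ⟨k, hk⟩
        rw [hon.zpow_apply_eq hx] at hk
        have : (4 : ℤ) ∣ 4 * k + 2 := dvd_trans (by exact_mod_cast h4) hk
        omega
      simp [v, h1, h2] at hv
    · funext i
      rw [symMat_mulVec_aux]
      have := key i
      split_ifs with h
      · rw [← h] at this
        simpa using self_eq_neg.1 this
      · simp [this]
  · rintro ⟨v, hv, h0⟩
    obtain ⟨x, hx⟩ := Function.ne_iff.1 hv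
    simp only [Pi.zero_apply] at hx
    have hS : ∀ i, (if θ i = θ⁻¹ i then v (θ i) else v (θ i) + v (θ⁻¹ i)) = 0 := by
      intro i
      rw [← symMat_mulVec_aux, h0]; rfl
    have h2 : ∀ y, v y ≠ 0 → θ (θ y) ≠ y ∧ v (θ (θ y)) = - v y := by
      intro y hy
      have := hS (θ y)
      rw [show θ⁻¹ (θ y) = y from θ.symm_apply_apply y] at this
      split_ifs at this with h
      · rw [h] at this; exact absurd this hy
      · exact ⟨h, eq_neg_of_add_eq_zero_left this⟩
    have hk : ∀ k : ℕ, v ((θ ^ (2 * k)) x) = (-1) ^ k * v x := by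
      intro k
      induction k with
      | zero => simp
      | succ k ih =>
        have h3 := h2 ((θ ^ (2 * k)) x) (by rw [ih]; simp [hx])
        rw [show 2 * (k + 1) = 1 + (1 + 2 * k) by ring, pow_add, pow_add,
            Equiv.Perm.mul_apply, Equiv.Perm.mul_apply, pow_one, h3.2, ih]
        ring
    have hxs : θ x ≠ x := fun h => (h2 x hx).1 (by rw [h, h])
    have hon := Equiv.Perm.isCycleOn_support_cycleOf θ x
    have hmem : x ∈ (θ.cycleOf x).support := by
      rw [Equiv.Perm.mem_support_cycleOf_iff]
      exact ⟨Equiv.Perm.SameCycle.refl _ _, Equiv.Perm.mem_support.2 hxs⟩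
    refine ⟨θ.cycleOf x, Equiv.Perm.cycleOf_mem_cycleFactorsFinset_iff.2
      (Equiv.Perm.mem_support.2 hxs), ?_⟩
    have hev : ∀ k : ℕ, (θ.cycleOf x).support.card ∣ 2 * k → Even k := by
      intro k hd
      have := hk k
      rw [(hon.pow_apply_eq hmem).2 hd] at this
      by_contra ho
      rw [(Nat.not_even_iff_odd.1 ho).neg_one_pow] at this
      exact hx (self_eq_neg.1 (by simpa using this))
    generalize (θ.cycleOf x).support.card = m at hev
    obtain ⟨a, rfl⟩ := (hev m (Dvd.intro_left 2 rfl))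
    obtain ⟨b, rfl⟩ := hev a (by rw [two_mul])
    omega
end
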